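/- arXiv:2403.03724 — 7 statements merged into one kernel-verified Lean document; each statement's English description precedes it below -/
import Mathlib

section
/- There exists a bijection φ: V → {1, …, n} with linear arrangement cost at most X if and only if there exists a binary tree B on the vertex set V ∪ H with cost(B) ≤ C. -/
/-!
Arrangements correspond to caterpillars: hang the vertex at position `p` off `h_{p+1}` on the path
`h_1, …, h_{n+2}`. The cost of a network splits into the length of the spine, with weight `d₂`, the
distances from `V` to the anchors `h_2` and `h_{n+1}`, with weight `d₁`, and the length of the edges
of `G`. In the caterpillar of `φ` these are `n + 1`, at most `n + 1` per vertex, and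
`|φ u - φ v| + 2` per edge.

Conversely, the weights are scales so far apart that a binary tree of cost at most `C` minimises the
spine length and then the anchor distances. Hence it contains the spine, and since the distances
from `v` to the anchors sum to `n - 1` plus twice the distance from `v` to the stretch of spine
between them, every `v` is adjacent to one of `h_2, …, h_{n+1}`. A tree is a minimal connected
graph, so the network is a caterpillar, and the degree bound makes its attachment map injective.
For `n = 1` the anchors coincide and the distance identity breaks down, but all arrangements cost
`0`.
-/

open Finset SimpleGraph

/-- Vertex set `V ∪ H`: `V = {v_1, …, v_n}` as `Fin n` (0-indexed) and
`H = {h_1, …, h_{n+2}}` as `Fin (n+2)` (0-indexed, so `h_j` is `Sum.inr ⟨j-1, _⟩`). -/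
abbrev Vtx (n : ℕ) : Type := Fin n ⊕ Fin (n + 2)

/-- The demand matrix of the reduction, with `d₁ = X + 2m + 1` and `d₂ = (n² + n + 1)·d₁`:
demand `1` between endpoints of edges of `G`, demand `d₁` between each `v ∈ V` and each of
`h_2`, `h_{n+1}` (0-indexed: `1` and `n`), demand `d₂` between consecutive `h`'s, else `0`. -/
def demand (n m X : ℕ) (G : SimpleGraph (Fin n)) [DecidableRel G.Adj] :
    Vtx n → Vtx n → ℕ
  | Sum.inl i, Sum.inl j => if G.Adj i j then 1 else 0
  | Sum.inl _, Sum.inr j => if j.val = 1 ∨ j.val = n then X + 2 * m + 1 else 0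
  | Sum.inr j, Sum.inl _ => if j.val = 1 ∨ j.val = n then X + 2 * m + 1 else 0
  | Sum.inr i, Sum.inr j =>
      if i.val + 1 = j.val ∨ j.val + 1 = i.val then (n ^ 2 + n + 1) * (X + 2 * m + 1) else 0

lemma demand_symm (n m X : ℕ) (G : SimpleGraph (Fin n)) [DecidableRel G.Adj]
    (x y : Vtx n) : demand n m X G x y = demand n m X G y x := by
  cases x <;> cases y <;> simp [demand, SimpleGraph.adj_comm, or_comm]

/-- The cost of a network `B`: the sum over unordered pairs `{x, y}` of
`W(x,y) · D_B(x,y)` (diagonal pairs contribute `0` since `D_B(x,x) = 0`). -/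
noncomputable def cost (n m X : ℕ) (G : SimpleGraph (Fin n)) [DecidableRel G.Adj]
    (B : SimpleGraph (Vtx n)) : ℕ :=
  ∑ p ∈ (Finset.univ : Finset (Vtx n)).sym2,
    Sym2.lift ⟨fun x y => demand n m X G x y * B.dist x y,
      fun x y => by simp only []; rw [demand_symm, B.dist_comm]⟩ p

/-- The constant `C = (n+1)·d₂ + n·(n+1)·d₁ + X + 2m`. -/
def Cbound (n m X : ℕ) : ℕ :=
  (n + 1) * ((n ^ 2 + n + 1) * (X + 2 * m + 1)) + n * (n + 1) * (X + 2 * m + 1) + X + 2 * m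

/-- A binary tree: a connected acyclic simple graph all of whose degrees are at most 3. -/
def IsBinaryTree {n : ℕ} (B : SimpleGraph (Vtx n)) : Prop :=
  B.IsTree ∧ ∀ x : Vtx n, (B.neighborSet x).ncard ≤ 3

/-- The linear arrangement cost of a bijection `φ : V → {1, …, n}` (formalized as a
permutation of `Fin n`): `Σ_{{u,v} ∈ E} |φ(u) − φ(v)|`. -/
noncomputable def laCost (n : ℕ) (G : SimpleGraph (Fin n)) [DecidableRel G.Adj]
    (φ : Fin n ≃ Fin n) : ℕ :=
  ∑ e ∈ G.edgeFinset,
    Sym2.lift ⟨fun a b => (((φ a : ℕ) : ℤ) - ((φ b : ℕ) : ℤ)).natAbs,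
      fun a b => by simp only []; rw [← Int.natAbs_neg, neg_sub]⟩ e

lemma le_of_mul_le_mul_add {d s t b : ℕ} (hb : b < d) (h : d * s ≤ d * t + b) : s ≤ t := by
  have hlt : d * s < d * (t + 1) := by
    rw [mul_add_one]
    omega
  exact Nat.lt_succ_iff.1 (Nat.lt_of_mul_lt_mul_left hlt)

section Tree

variable {V W : Type*} {G : SimpleGraph V} {H : SimpleGraph W}

lemma isPath_append {u v w : V} {p : G.Walk u v} {q : G.Walk v w} (hp : p.IsPath)
    (hq : q.IsPath) (hpq : ∀ t ∈ p.support, t ∈ q.support → t = v) : (p.append q).IsPath := by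
  have hv : v ∉ q.support.tail := by
    have := hq.support_nodup
    rw [← q.cons_tail_support] at this
    exact (List.nodup_cons.1 this).1
  rw [Walk.isPath_def, Walk.support_append]
  refine hp.support_nodup.append hq.support_nodup.tail fun t htp htq => ?_
  obtain rfl := hpq t htp (List.mem_of_mem_tail htq)
  exact hv htq

lemma length_eq_dist_of_isPath (hG : G.IsAcyclic) {u v : V} {p : G.Walk u v} (hp : p.IsPath) :
    p.length = G.dist u v := by
  obtain ⟨q, hq, hlen⟩ := p.reachable.exists_path_of_dist
  obtain rfl : p = q :=
    congrArg Subtype.val ((hG.subsingleton_path u v).elim ⟨p, hp⟩ ⟨q, hq⟩)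
  exact hlen

lemma exists_mem_support_dist_add_dist_eq (hG : G.IsTree) {a b : V} {p : G.Walk a b}
    (hp : p.IsPath) (x : V) :
    ∃ c ∈ p.support, G.dist x a + G.dist x b = p.length + 2 * G.dist x c := by
  classical
  obtain ⟨r, hr⟩ := hG.connected.exists_isPath x a
  -- Where the path from `x` to `a` first meets `p` it forks into paths to `a` and to `b`.
  obtain ⟨c, hcp, hcr, hfirst⟩ := r.exists_mem_support_forall_mem_support_imp_eq
    p.support.toFinset ⟨a, by simp⟩
  rw [List.mem_toFinset] at hcp
  simp only [List.mem_toFinset] at hfirst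
  have ha := length_eq_dist_of_isPath hG.isAcyclic <|
    isPath_append (hr.takeUntil hcr) (hp.takeUntil hcp).reverse fun t ht ht' =>
      hfirst t (p.support_takeUntil_subset_support hcp (by simpa using ht')) ht
  have hb := length_eq_dist_of_isPath hG.isAcyclic <|
    isPath_append (hr.takeUntil hcr) (hp.dropUntil hcp) fun t ht ht' =>
      hfirst t (p.support_dropUntil_subset_support hcp ht') ht
  have hc := length_eq_dist_of_isPath hG.isAcyclic (hr.takeUntil hcr)
  have hsplit := congrArg Walk.length (p.take_spec hcp)
  simp only [Walk.length_append, Walk.length_reverse] at ha hb hsplit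
  exact ⟨c, hcp, by omega⟩

lemma dist_add_dist_eq_of_mem_support {a b c : V} {p : G.Walk a b} (hp : p.length = G.dist a b)
    (hc : c ∈ p.support) : G.dist a c + G.dist c b = G.dist a b := by
  classical
  have hsplit := congrArg Walk.length (p.take_spec hc)
  rw [Walk.length_append, length_eq_dist_of_subwalk hp (p.isSubwalk_takeUntil hc),
    length_eq_dist_of_subwalk hp (p.isSubwalk_dropUntil hc), hp] at hsplit
  exact hsplit

lemma exists_between_dist_add_dist_eq (hG : G.IsTree) (hH : H.Connected) {f : W → V}
    (hHG : H ≤ G.comap f) (hf : Function.Injective f) (i j : W) (x : V) :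
    ∃ k, H.dist i k + H.dist k j = H.dist i j ∧
      G.dist x (f i) + G.dist x (f j) = H.dist i j + 2 * G.dist x (f k) := by
  obtain ⟨p, hp, hlen⟩ := hH.exists_path_of_dist i j
  obtain ⟨c, hc, hdist⟩ := exists_mem_support_dist_add_dist_eq hG
    (hp.map (f := ⟨f, @hHG⟩) hf) x
  rw [Walk.support_map] at hc
  obtain ⟨k, hk, rfl⟩ := List.mem_map.1 hc
  rw [Walk.length_map, hlen] at hdist
  exact ⟨k, dist_add_dist_eq_of_mem_support hlen hk, hdist⟩

lemma dist_eq_dist_add_one_of_neighborSet_eq_singleton (hG : G.Connected) {u x y : V}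
    (hx : G.neighborSet x = {u}) (hxy : x ≠ y) : G.dist x y = G.dist u y + 1 := by
  have hxu : G.dist x u = 1 := dist_eq_one_iff_adj.2 (by simp [← mem_neighborSet, hx])
  refine le_antisymm (by have := hG.dist_triangle (u := x) (v := u) (w := y); omega) ?_
  obtain ⟨p, hp⟩ := hG.exists_walk_length_eq_dist x y
  cases p with
  | nil => exact absurd rfl hxy
  | @cons _ v _ h q =>
    obtain rfl : v = u := by simpa [← mem_neighborSet, hx] using h
    rw [← hp, Walk.length_cons]
    exact Nat.add_le_add_right (dist_le q) 1

lemma isTree_of_card_edgeSet_add_one_le [Finite V] (hG : G.Connected)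
    (hcard : Nat.card G.edgeSet + 1 ≤ Nat.card V) : G.IsTree :=
  isTree_iff_connected_and_card.2
    ⟨hG, hcard.antisymm hG.card_vert_le_card_edgeSet_add_one⟩

end Tree

section PathGraph

lemma natAbs_sub_le_walk_length {n : ℕ} {i j : Fin n} (p : (pathGraph n).Walk i j) :
    ((i : ℤ) - j).natAbs ≤ p.length := by
  induction p with
  | nil => simp
  | cons h p ih =>
    rw [pathGraph_adj] at h
    rw [Walk.length_cons]
    omega

lemma dist_pathGraph_le {n : ℕ} (k : ℕ) {i j : Fin n} (hij : (i : ℕ) + k = j) :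
    (pathGraph n).dist i j ≤ k := by
  induction k generalizing j with
  | zero =>
    obtain rfl : i = j := Fin.ext hij
    simp
  | succ k ih =>
    let j' : Fin n := ⟨i + k, by omega⟩
    have hadj : (pathGraph n).dist j' j = 1 :=
      dist_eq_one_iff_adj.2 (pathGraph_adj.2 (.inl (by simpa [j', add_assoc] using hij)))
    have := (pathGraph_preconnected n i j').dist_triangle_left j
    have := ih (j := j') rfl
    omega

lemma dist_pathGraph {n : ℕ} (i j : Fin n) :
    (pathGraph n).dist i j = ((i : ℤ) - j).natAbs := by
  refine le_antisymm ?_ ?_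
  · rcases le_total i j with h | h
    · exact dist_pathGraph_le _ (by omega)
    · rw [dist_comm]
      exact dist_pathGraph_le _ (by omega)
  · obtain ⟨p, hp⟩ := (pathGraph_preconnected n i j).exists_walk_length_eq_dist
    exact hp ▸ natAbs_sub_le_walk_length p

lemma edgeSet_pathGraph_succ (n : ℕ) :
    (pathGraph (n + 1)).edgeSet = Set.range fun i : Fin n => s(i.castSucc, i.succ) := by
  ext e
  induction e with
  | _ i j =>
    simp only [mem_edgeSet, pathGraph_adj, Set.mem_range, Sym2.eq_iff, Fin.ext_iff,
      Fin.val_castSucc, Fin.val_succ]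
    constructor
    · rintro (h | h)
      · exact ⟨⟨i, by omega⟩, .inl ⟨rfl, h⟩⟩
      · exact ⟨⟨j, by omega⟩, .inr ⟨rfl, h⟩⟩
    · rintro ⟨k, h⟩
      omega

lemma isTree_pathGraph (n : ℕ) : (pathGraph (n + 1)).IsTree := by
  refine isTree_of_card_edgeSet_add_one_le (pathGraph_connected n) ?_
  rw [edgeSet_pathGraph_succ]
  simpa using Finite.card_range_le fun i : Fin n => s(i.castSucc, i.succ)

instance (n : ℕ) : DecidableRel (pathGraph n).Adj := fun _ _ => decidable_of_iff' _ pathGraph_adj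

lemma card_edgeFinset_pathGraph_succ (n : ℕ) : #(pathGraph (n + 1)).edgeFinset = n := by
  simpa using (isTree_pathGraph n).card_edgeFinset

lemma ncard_neighborSet_pathGraph_le {n : ℕ} (i : Fin n) :
    ((pathGraph n).neighborSet i).ncard ≤ 2 := by
  have hsub : (pathGraph n).neighborSet i ⊆
      {j | (i : ℕ) + 1 = j} ∪ {j | (j : ℕ) + 1 = i} := fun _ => pathGraph_adj.1
  have hnext : {j : Fin n | (i : ℕ) + 1 = j}.ncard ≤ 1 :=
    Set.ncard_le_one_iff_subsingleton.2 fun a ha b hb => Fin.ext (ha.symm.trans hb)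
  have hprev : {j : Fin n | (j : ℕ) + 1 = i}.ncard ≤ 1 :=
    Set.ncard_le_one_iff_subsingleton.2 fun a ha b hb =>
      Fin.ext (Nat.succ_injective (ha.trans hb.symm))
  exact (Set.ncard_le_ncard hsub).trans ((Set.ncard_union_le _ _).trans (add_le_add hnext hprev))

lemma neighborSet_pathGraph_castSucc_succ {n : ℕ} (i : Fin n) :
    (pathGraph (n + 2)).neighborSet i.castSucc.succ = {i.castSucc.castSucc, i.succ.succ} := by
  ext j
  simp only [mem_neighborSet, pathGraph_adj, Set.mem_insert_iff, Set.mem_singleton_iff,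
    Fin.ext_iff, Fin.val_castSucc, Fin.val_succ]
  omega

end PathGraph

section AttachLeaves

variable {α β : Type*} {H : SimpleGraph β} {f : α → β}

/-- The graph `H` with a new leaf `inl a` attached to the vertex `f a`, for each `a : α`. -/
def attachLeaves (H : SimpleGraph β) (f : α → β) : SimpleGraph (α ⊕ β) where
  Adj
    | .inl _, .inl _ => False
    | .inl a, .inr b => f a = b
    | .inr b, .inl a => f a = b
    | .inr b, .inr c => H.Adj b c
  symm := ⟨by rintro (a | b) (a' | b') h <;> first | exact h | exact h.symm⟩
  loopless := ⟨by rintro (a | b) h <;> first | exact h | exact H.loopless.irrefl b h⟩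

/-- The inclusion of `H` into the graph obtained from it by attaching leaves. -/
def attachLeavesInr : H ↪g attachLeaves H f := ⟨.inr, Iff.rfl⟩

lemma attachLeaves_le_iff {B : SimpleGraph (α ⊕ β)} :
    attachLeaves H f ≤ B ↔
      H ≤ B.comap Sum.inr ∧ ∀ a, B.Adj (.inl a) (.inr (f a)) := by
  refine ⟨fun h => ⟨fun b c hbc => @h (.inr b) (.inr c) hbc, fun a => @h _ (.inr (f a)) rfl⟩, ?_⟩
  rintro ⟨hH, hf⟩ (a | b) (a' | b') (h : _)
  · exact h.elim
  · obtain rfl : f a = b' := h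
    exact hf a
  · obtain rfl : f a' = b := h
    exact (hf a').symm
  · exact hH h

lemma neighborSet_attachLeaves_inl (a : α) :
    (attachLeaves H f).neighborSet (.inl a) = {.inr (f a)} := by
  ext (a' | b)
  · exact iff_of_false id Sum.inl_ne_inr
  · exact ⟨fun (h : f a = b) => congrArg Sum.inr h.symm, fun h => (Sum.inr.inj h).symm⟩

lemma neighborSet_attachLeaves_inr (b : β) :
    (attachLeaves H f).neighborSet (.inr b) =
      Sum.inl '' (f ⁻¹' {b}) ∪ Sum.inr '' H.neighborSet b := by
  ext (a | c) <;> simp [attachLeaves]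

lemma ncard_neighborSet_attachLeaves_inr [Finite α] [Finite β] (b : β) :
    ((attachLeaves H f).neighborSet (.inr b)).ncard =
      (f ⁻¹' {b}).ncard + (H.neighborSet b).ncard := by
  rw [neighborSet_attachLeaves_inr, Set.ncard_union_eq Set.disjoint_image_inl_image_inr,
    Set.ncard_image_of_injective _ Sum.inl_injective,
    Set.ncard_image_of_injective _ Sum.inr_injective]

lemma edgeSet_attachLeaves :
    (attachLeaves H f).edgeSet =
      Set.range (fun a => (s(.inl a, .inr (f a)) : Sym2 (α ⊕ β))) ∪
        Sym2.map Sum.inr '' H.edgeSet := by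
  ext e
  induction e with
  | _ x y =>
    rcases x with a | b <;> rcases y with a' | c <;>
      simp [attachLeaves, Sym2.exists, and_or_left, exists_or, adj_comm]

lemma connected_attachLeaves (hH : H.Connected) : (attachLeaves H f).Connected := by
  have hmin := attachLeaves_le_iff.1 (le_refl (attachLeaves H f))
  have hfoot : ∀ x, ∃ b, (attachLeaves H f).Reachable x (.inr b)
    | .inl a => ⟨f a, (hmin.2 a).reachable⟩
    | .inr b => ⟨b, .rfl⟩
  refine { preconnected := fun x y => ?_, nonempty := hH.nonempty.map Sum.inr }
  obtain ⟨b, hb⟩ := hfoot x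
  obtain ⟨c, hc⟩ := hfoot y
  exact (hb.trans ((hH.preconnected b c).map attachLeavesInr.toHom)).trans hc.symm

lemma isTree_attachLeaves [Finite α] [Finite β] (hH : H.IsTree) :
    (attachLeaves H f).IsTree := by
  refine isTree_of_card_edgeSet_add_one_le (connected_attachLeaves hH.connected) ?_
  have hH_card : H.edgeSet.ncard + 1 = Nat.card β := (isTree_iff_connected_and_card.1 hH).2
  calc (attachLeaves H f).edgeSet.ncard + 1
      ≤ (Set.range fun a => (s(.inl a, .inr (f a)) : Sym2 (α ⊕ β))).ncard
          + (Sym2.map (Sum.inr : β → α ⊕ β) '' H.edgeSet).ncard + 1 := by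
        rw [edgeSet_attachLeaves]
        exact Nat.add_le_add_right (Set.ncard_union_le _ _) 1
    _ ≤ Nat.card α + H.edgeSet.ncard + 1 := by
        gcongr
        · exact Finite.card_range_le _
        · exact Set.ncard_image_le
    _ = Nat.card (α ⊕ β) := by rw [Nat.card_sum, add_assoc, hH_card]

lemma exists_walk_length_le_of_walk_attachLeaves {x y : α ⊕ β}
    (p : (attachLeaves H f).Walk x y) :
    ∃ q : H.Walk (Sum.elim f id x) (Sum.elim f id y), q.length ≤ p.length := by
  induction p with
  | nil => exact ⟨.nil, le_rfl⟩
  | @cons x z y h p ih =>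
    obtain ⟨q, hq⟩ := ih
    have hstep : Sum.elim f id x = Sum.elim f id z ∨ H.Adj (Sum.elim f id x) (Sum.elim f id z) := by
      rcases x with a | b <;> rcases z with a' | c
      · exact h.elim
      · exact .inl h
      · exact .inl (Eq.symm h)
      · exact .inr h
    rcases hstep with heq | hadj
    · exact ⟨q.copy heq.symm rfl, by simpa using hq.trans (Nat.le_succ _)⟩
    · exact ⟨.cons hadj q, by simpa using hq⟩

lemma dist_attachLeaves_inr_inr (hH : H.Connected) (b c : β) :
    (attachLeaves H f).dist (.inr b) (.inr c) = H.dist b c := by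
  apply le_antisymm
  · obtain ⟨p, hp⟩ := hH.exists_walk_length_eq_dist b c
    rw [← hp, ← p.length_map (attachLeavesInr (f := f)).toHom]
    exact dist_le _
  · obtain ⟨p, hp⟩ :=
      (connected_attachLeaves (f := f) hH).exists_walk_length_eq_dist (.inr b) (.inr c)
    obtain ⟨q, hq⟩ := exists_walk_length_le_of_walk_attachLeaves p
    exact (dist_le q).trans (hq.trans_eq hp)

lemma dist_attachLeaves_inl_inr (hH : H.Connected) (a : α) (b : β) :
    (attachLeaves H f).dist (.inl a) (.inr b) = H.dist (f a) b + 1 := by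
  rw [dist_eq_dist_add_one_of_neighborSet_eq_singleton (connected_attachLeaves hH)
    (neighborSet_attachLeaves_inl a) Sum.inl_ne_inr, dist_attachLeaves_inr_inr hH]

lemma dist_attachLeaves_inl_inl (hH : H.Connected) {a a' : α} (ha : a ≠ a') :
    (attachLeaves H f).dist (.inl a) (.inl a') = H.dist (f a) (f a') + 2 := by
  rw [dist_eq_dist_add_one_of_neighborSet_eq_singleton (connected_attachLeaves hH)
    (neighborSet_attachLeaves_inl a) (Sum.inl_injective.ne ha), dist_comm,
    dist_attachLeaves_inl_inr hH, dist_comm]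

lemma eq_attachLeaves_of_le {B : SimpleGraph (α ⊕ β)} (hB : B.IsTree) (hH : H.Connected)
    (hHB : H ≤ B.comap Sum.inr) (hf : ∀ a, B.Adj (.inl a) (.inr (f a))) :
    B = attachLeaves H f :=
  (isTree_iff_minimal_connected.1 hB).eq_of_le (connected_attachLeaves hH)
    (attachLeaves_le_iff.2 ⟨hHB, hf⟩) |>.symm

end AttachLeaves

section EmbeddingLength

variable {α β : Type*} {D : SimpleGraph α} [Fintype D.edgeSet] {B : SimpleGraph β} {f : α → β}

/-- The distance in `B` between the two members of an unordered pair. -/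
noncomputable def sym2Dist (B : SimpleGraph β) : Sym2 β → ℕ :=
  Sym2.lift ⟨B.dist, fun _ _ => B.dist_comm⟩

/-- The total length of the edges of `D` when its vertices are placed in `B` by `f`: the cost of
routing a unit demand along each edge of `D` through the network `B`. -/
noncomputable def embeddingLength (D : SimpleGraph α) [Fintype D.edgeSet] (B : SimpleGraph β)
    (f : α → β) : ℕ :=
  ∑ e ∈ D.edgeFinset, sym2Dist B (e.map f)

lemma sum_map_edgeFinset_sym2Dist (D : SimpleGraph α) [Fintype D.edgeSet] (B : SimpleGraph β)
    (f : α ↪ β) : ∑ e ∈ D.edgeFinset.map f.sym2Map, sym2Dist B e = embeddingLength D B f :=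
  sum_map ..

lemma one_le_sym2Dist_map (hB : B.Connected) (hf : Function.Injective f) {e : Sym2 α}
    (he : e ∈ D.edgeFinset) : 1 ≤ sym2Dist B (e.map f) := by
  induction e with
  | _ a b => exact hB.pos_dist_of_ne (hf.ne (D.ne_of_adj (mem_edgeFinset.1 he)))

lemma card_edgeFinset_le_embeddingLength (hB : B.Connected) (hf : Function.Injective f) :
    #D.edgeFinset ≤ embeddingLength D B f := by
  rw [card_eq_sum_ones]
  exact sum_le_sum fun e he => one_le_sym2Dist_map hB hf he

lemma le_comap_of_embeddingLength_le (hB : B.Connected) (hf : Function.Injective f)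
    (h : embeddingLength D B f ≤ #D.edgeFinset) : D ≤ B.comap f := by
  have hsum : ∑ e ∈ D.edgeFinset, 1 = embeddingLength D B f := by
    rw [← card_eq_sum_ones]
    exact (card_edgeFinset_le_embeddingLength hB hf).antisymm h
  have hone := (sum_eq_sum_iff_of_le fun e he => one_le_sym2Dist_map hB hf he).1 hsum
  intro a b hab
  exact (dist_eq_one_iff_adj (G := B)).1 (hone s(a, b) (mem_edgeFinset.2 hab)).symm

lemma embeddingLength_attachLeaves_inr {H : SimpleGraph β} [Fintype H.edgeSet] (hH : H.Connected)
    (f : α → β) : embeddingLength H (attachLeaves H f) Sum.inr = #H.edgeFinset := by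
  rw [card_eq_sum_ones]
  refine sum_congr rfl fun e he => ?_
  induction e with
  | _ b c =>
    exact (dist_attachLeaves_inr_inr hH b c).trans (dist_eq_one_iff_adj.2 (mem_edgeFinset.1 he))

lemma embeddingLength_attachLeaves_inl {H : SimpleGraph β} (hH : H.Connected) (f : α → β) :
    embeddingLength D (attachLeaves H f) Sum.inl = embeddingLength D H f + 2 * #D.edgeFinset := by
  rw [mul_comm, ← smul_eq_mul, ← sum_const, embeddingLength, embeddingLength, ← sum_add_distrib]
  refine sum_congr rfl fun e he => ?_
  induction e with
  | _ a b => exact dist_attachLeaves_inl_inl hH (D.ne_of_adj (mem_edgeFinset.1 he))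

end EmbeddingLength

section Cost

variable {n : ℕ}

/-- The indices of the anchors `h_2` and `h_{n+1}`, which coincide when `n = 1`. -/
def anchors (n : ℕ) : Finset (Fin (n + 2)) := {1, (Fin.last n).castSucc}

/-- The total distance in `B` from the vertices in `V` to the anchors. -/
noncomputable def anchorCost (B : SimpleGraph (Vtx n)) : ℕ :=
  ∑ v, ∑ a ∈ anchors n, B.dist (.inl v) (.inr a)

lemma mem_anchors_iff {j : Fin (n + 2)} : j ∈ anchors n ↔ j.val = 1 ∨ j.val = n := by
  simp [anchors, Fin.ext_iff]

/-- The pairs of a vertex in `V` and an anchor. -/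
def anchorPairs (n : ℕ) : Finset (Sym2 (Vtx n)) :=
  (univ ×ˢ anchors n).image fun p => s(.inl p.1, .inr p.2)

lemma sum_anchorPairs (B : SimpleGraph (Vtx n)) :
    ∑ e ∈ anchorPairs n, sym2Dist B e = anchorCost B := by
  rw [anchorPairs, sum_image, sum_product]
  · rfl
  · rintro ⟨v, a⟩ - ⟨w, b⟩ - h
    simpa using h

lemma demand_eq (m X : ℕ) (G : SimpleGraph (Fin n)) [DecidableRel G.Adj] (x y : Vtx n) :
    demand n m X G x y =
      (if s(x, y) ∈ (pathGraph (n + 2)).edgeFinset.map Function.Embedding.inr.sym2Map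
        then (n ^ 2 + n + 1) * (X + 2 * m + 1) else 0) +
      (if s(x, y) ∈ anchorPairs n then X + 2 * m + 1 else 0) +
      (if s(x, y) ∈ G.edgeFinset.map Function.Embedding.inl.sym2Map then 1 else 0) := by
  rcases x with v | i <;> rcases y with w | j <;>
    simp [demand, anchorPairs, mem_anchors_iff, Sym2.exists, ← pathGraph_adj, and_or_left,
      exists_or, adj_comm]

lemma cost_eq (m X : ℕ) (G : SimpleGraph (Fin n)) [DecidableRel G.Adj] (B : SimpleGraph (Vtx n)) :
    cost n m X G B =
      (n ^ 2 + n + 1) * (X + 2 * m + 1) * embeddingLength (pathGraph (n + 2)) B Sum.inr +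
        (X + 2 * m + 1) * anchorCost B + embeddingLength G B Sum.inl := by
  have hsplit (e : Sym2 (Vtx n)) :
      Sym2.lift ⟨fun x y => demand n m X G x y * B.dist x y,
          fun x y => by simp only []; rw [demand_symm, B.dist_comm]⟩ e =
        (if e ∈ (pathGraph (n + 2)).edgeFinset.map Function.Embedding.inr.sym2Map
          then (n ^ 2 + n + 1) * (X + 2 * m + 1) * sym2Dist B e else 0) +
        (if e ∈ anchorPairs n then (X + 2 * m + 1) * sym2Dist B e else 0) +
        (if e ∈ G.edgeFinset.map Function.Embedding.inl.sym2Map then sym2Dist B e else 0) := by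
    induction e with
    | _ x y => simp only [Sym2.lift_mk, demand_eq, sym2Dist, add_mul, ite_mul, zero_mul, one_mul]
  simp only [cost, hsplit, sum_add_distrib, sym2_univ, sum_ite_mem, univ_inter, ← mul_sum,
    sum_anchorPairs, sum_map_edgeFinset_sym2Dist]
  rfl

end Cost

section Caterpillar

variable {n : ℕ}

/-- The caterpillar with spine `h_1, …, h_{n+2}` in which `v` hangs off the inner spine vertex
number `g v`, counted from zero; for an arrangement `φ` this is where `φ` places `v`. -/
def caterpillar (g : Fin n → Fin n) : SimpleGraph (Vtx n) :=
  attachLeaves (pathGraph (n + 2)) fun v => (g v).castSucc.succ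

lemma isBinaryTree_caterpillar_iff {g : Fin n → Fin n} :
    IsBinaryTree (caterpillar g) ↔ Function.Injective g := by
  have hfoot : Function.Injective fun k : Fin n => k.castSucc.succ :=
    (Fin.succ_injective _).comp (Fin.castSucc_injective _)
  constructor
  · rintro ⟨-, hdeg⟩ v w hvw
    have hspine : ((pathGraph (n + 2)).neighborSet (g w).castSucc.succ).ncard = 2 := by
      rw [neighborSet_pathGraph_castSucc_succ]
      refine Set.ncard_pair (Fin.ne_of_val_ne ?_)
      simp only [Fin.val_castSucc, Fin.val_succ]
      omega
    have hleaves := hdeg (.inr (g w).castSucc.succ)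
    rw [caterpillar, ncard_neighborSet_attachLeaves_inr, hspine] at hleaves
    exact Set.ncard_le_one_iff_subsingleton.1 (Nat.le_of_add_le_add_right hleaves)
      (congrArg (fun k : Fin n => k.castSucc.succ) hvw) rfl
  · refine fun hg => ⟨isTree_attachLeaves (isTree_pathGraph (n + 1)), ?_⟩
    rintro (v | i)
    · rw [caterpillar, neighborSet_attachLeaves_inl, Set.ncard_singleton]
      norm_num
    · rw [caterpillar, ncard_neighborSet_attachLeaves_inr]
      exact add_le_add (Set.ncard_le_one_iff_subsingleton.2 <|
        Set.subsingleton_singleton.preimage (hfoot.comp hg)) (ncard_neighborSet_pathGraph_le i)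

lemma sum_anchors_dist_pathGraph_le (k : Fin n) :
    ∑ a ∈ anchors n, ((pathGraph (n + 2)).dist k.castSucc.succ a + 1) ≤ n + 1 := by
  have hk := k.isLt
  by_cases h : (1 : Fin (n + 2)) = (Fin.last n).castSucc
  · have hn : 1 = n := by simpa [Fin.ext_iff] using h
    simp only [anchors, h, mem_singleton, insert_eq_of_mem, dist_pathGraph, Fin.val_succ,
      Fin.val_castSucc, Nat.cast_add, Nat.cast_one, sum_singleton, Fin.val_last]
    omega
  · rw [anchors, sum_pair h]
    simp only [dist_pathGraph, Fin.val_succ, Fin.val_castSucc, Nat.cast_add, Nat.cast_one,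
      Fin.coe_ofNat_eq_mod, Nat.one_mod, add_sub_cancel_right, Int.natAbs_natCast, Fin.val_last]
    omega

lemma anchorCost_caterpillar_le (g : Fin n → Fin n) : anchorCost (caterpillar g) ≤ n * (n + 1) := by
  have hv (v : Fin n) : ∑ a ∈ anchors n, (caterpillar g).dist (.inl v) (.inr a) ≤ n + 1 := by
    simp only [caterpillar, dist_attachLeaves_inl_inr (pathGraph_connected (n + 1))]
    exact sum_anchors_dist_pathGraph_le (g v)
  simpa [anchorCost] using sum_le_card_nsmul univ _ _ fun v _ => hv v

lemma embeddingLength_caterpillar (G : SimpleGraph (Fin n)) [DecidableRel G.Adj]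
    (φ : Fin n ≃ Fin n) :
    embeddingLength G (caterpillar φ) Sum.inl = laCost n G φ + 2 * #G.edgeFinset := by
  rw [caterpillar, embeddingLength_attachLeaves_inl (pathGraph_connected (n + 1))]
  congr 1
  refine sum_congr rfl fun e _ => ?_
  induction e with
  | _ a b => simp [sym2Dist, dist_pathGraph]

lemma cost_caterpillar_add_le (X : ℕ) (G : SimpleGraph (Fin n)) [DecidableRel G.Adj]
    (φ : Fin n ≃ Fin n) :
    cost n #G.edgeFinset X G (caterpillar φ) + X ≤ Cbound n #G.edgeFinset X + laCost n G φ := by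
  have hspine : embeddingLength (pathGraph (n + 2)) (caterpillar φ) Sum.inr = n + 1 :=
    (embeddingLength_attachLeaves_inr (pathGraph_connected (n + 1)) _).trans
      (card_edgeFinset_pathGraph_succ (n + 1))
  have hanchor := Nat.mul_le_mul_left (X + 2 * #G.edgeFinset + 1) (anchorCost_caterpillar_le φ)
  rw [cost_eq, hspine, embeddingLength_caterpillar, Cbound]
  linarith

end Caterpillar

section CheapNetworks

variable {n : ℕ} {B : SimpleGraph (Vtx n)}

lemma exists_sum_anchors_dist_add_one_eq (hn : 2 ≤ n) (hB : B.IsTree)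
    (hspine : pathGraph (n + 2) ≤ B.comap Sum.inr) (v : Fin n) :
    ∃ k : Fin n, ∑ a ∈ anchors n, B.dist (.inl v) (.inr a) + 1 =
      n + 2 * B.dist (.inl v) (.inr k.castSucc.succ) := by
  have hne : (1 : Fin (n + 2)) ≠ (Fin.last n).castSucc := by
    refine Fin.ne_of_val_ne ?_
    simp only [Fin.val_one, Fin.val_castSucc, Fin.val_last]
    omega
  obtain ⟨j, hbetween, hdist⟩ := exists_between_dist_add_dist_eq hB
    (pathGraph_connected (n + 1)) hspine Sum.inr_injective 1 (Fin.last n).castSucc (.inl v)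
  simp only [dist_pathGraph, Fin.val_one, Fin.val_castSucc, Fin.val_last] at hbetween hdist
  obtain ⟨k, rfl⟩ : ∃ k : Fin n, k.castSucc.succ = j :=
    ⟨⟨j - 1, by omega⟩, Fin.ext (by simp only [Fin.val_succ, Fin.val_castSucc]; omega)⟩
  refine ⟨k, ?_⟩
  rw [anchors, sum_pair hne]
  omega

lemma add_one_le_sum_anchors_dist (hn : 2 ≤ n) (hB : B.IsTree)
    (hspine : pathGraph (n + 2) ≤ B.comap Sum.inr) (v : Fin n) :
    n + 1 ≤ ∑ a ∈ anchors n, B.dist (.inl v) (.inr a) := by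
  obtain ⟨k, hk⟩ := exists_sum_anchors_dist_add_one_eq hn hB hspine v
  have hpos : 0 < B.dist (.inl v) (.inr k.castSucc.succ) :=
    hB.connected.pos_dist_of_ne Sum.inl_ne_inr
  omega

lemma mul_add_one_le_anchorCost (hn : 2 ≤ n) (hB : B.IsTree)
    (hspine : pathGraph (n + 2) ≤ B.comap Sum.inr) : n * (n + 1) ≤ anchorCost B := by
  simpa [anchorCost] using
    card_nsmul_le_sum univ _ _ fun v _ => add_one_le_sum_anchors_dist hn hB hspine v

lemma exists_adj_of_anchorCost_le (hn : 2 ≤ n) (hB : B.IsTree)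
    (hspine : pathGraph (n + 2) ≤ B.comap Sum.inr) (hanchor : anchorCost B ≤ n * (n + 1))
    (v : Fin n) : ∃ k : Fin n, B.Adj (.inl v) (.inr k.castSucc.succ) := by
  have hsum : ∑ _v : Fin n, (n + 1) = anchorCost B := by
    rw [(mul_add_one_le_anchorCost hn hB hspine).antisymm' hanchor]
    simp
  have hv := (sum_eq_sum_iff_of_le
    fun v _ => add_one_le_sum_anchors_dist hn hB hspine v).1 hsum v (mem_univ v)
  obtain ⟨k, hk⟩ := exists_sum_anchors_dist_add_one_eq hn hB hspine v
  exact ⟨k, dist_eq_one_iff_adj.1 (by omega)⟩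

lemma exists_eq_caterpillar_of_anchorCost_le (hn : 2 ≤ n) (hB : IsBinaryTree B)
    (hspine : pathGraph (n + 2) ≤ B.comap Sum.inr) (hanchor : anchorCost B ≤ n * (n + 1)) :
    ∃ φ : Fin n ≃ Fin n, B = caterpillar φ := by
  choose g hg using exists_adj_of_anchorCost_le hn hB.1 hspine hanchor
  have hcat : B = caterpillar g :=
    eq_attachLeaves_of_le hB.1 (pathGraph_connected (n + 1)) hspine hg
  have hinj : Function.Injective g := isBinaryTree_caterpillar_iff.1 (hcat ▸ hB)
  exact ⟨.ofBijective g (Finite.injective_iff_bijective.1 hinj), hcat⟩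

lemma exists_laCost_add_le_of_cost_le {m X : ℕ} {G : SimpleGraph (Fin n)} [DecidableRel G.Adj]
    (hn : 2 ≤ n) (hB : IsBinaryTree B) (hcost : cost n m X G B ≤ Cbound n m X) :
    ∃ φ : Fin n ≃ Fin n, laCost n G φ + 2 * #G.edgeFinset ≤ X + 2 * m := by
  rw [cost_eq, Cbound] at hcost
  have hspine_length : embeddingLength (pathGraph (n + 2)) B Sum.inr ≤ n + 1 :=
    le_of_mul_le_mul_add (d := (n ^ 2 + n + 1) * (X + 2 * m + 1))
      (b := n * (n + 1) * (X + 2 * m + 1) + X + 2 * m) (by nlinarith) <| by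
      linarith [Nat.zero_le ((X + 2 * m + 1) * anchorCost B)]
  rw [← card_edgeFinset_pathGraph_succ (n + 1)] at hspine_length
  have hspine := le_comap_of_embeddingLength_le hB.1.connected Sum.inr_injective hspine_length
  have hspine_length_ge := card_edgeFinset_le_embeddingLength (D := pathGraph (n + 2))
    hB.1.connected Sum.inr_injective
  rw [hspine_length.antisymm hspine_length_ge, card_edgeFinset_pathGraph_succ] at hcost
  have hanchor : anchorCost B ≤ n * (n + 1) :=
    le_of_mul_le_mul_add (d := X + 2 * m + 1) (b := X + 2 * m) (by omega) (by linarith)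
  rw [hanchor.antisymm (mul_add_one_le_anchorCost hn hB.1 hspine)] at hcost
  obtain ⟨φ, rfl⟩ := exists_eq_caterpillar_of_anchorCost_le hn hB hspine hanchor
  exact ⟨φ, by rw [← embeddingLength_caterpillar]; linarith⟩

end CheapNetworks

lemma laCost_eq_zero_of_le_one {n : ℕ} (hn : n ≤ 1) (G : SimpleGraph (Fin n))
    [DecidableRel G.Adj] (φ : Fin n ≃ Fin n) : laCost n G φ = 0 := by
  have := Fin.subsingleton_iff_le_one.2 hn
  simp [laCost, edgeFinset_eq_empty.2 (Subsingleton.elim G ⊥)]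

/-- There exists a bijection `φ : V → {1, …, n}` with linear arrangement
cost at most `X` if and only if there exists a binary tree `B` on `V ∪ H` with
`cost(B) ≤ C`. -/
theorem ola_iff_obt (n m X : ℕ) (hn : 1 ≤ n) (G : SimpleGraph (Fin n))
    [DecidableRel G.Adj] (hm : G.edgeFinset.card = m) :
    (∃ φ : Fin n ≃ Fin n, laCost n G φ ≤ X) ↔
      ∃ B : SimpleGraph (Vtx n), IsBinaryTree B ∧ cost n m X G B ≤ Cbound n m X := by
  subst hm
  constructor
  · rintro ⟨φ, hφ⟩
    refine ⟨caterpillar φ, isBinaryTree_caterpillar_iff.2 φ.injective, ?_⟩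
    have hcost := cost_caterpillar_add_le X G φ
    omega
  · rintro ⟨B, hB, hcost⟩
    rcases le_or_gt n 1 with hn_le | hn_gt
    · exact ⟨.refl _, (laCost_eq_zero_of_le_one hn_le G _).trans_le X.zero_le⟩
    · obtain ⟨φ, hφ⟩ := exists_laCost_add_le_of_cost_le hn_gt hB hcost
      exact ⟨φ, Nat.le_of_add_le_add_right hφ⟩
end

section
/- Let B be a binary tree on V ∪ H with cost(B) ≤ C. Then for every 1 ≤ i ≤ n+1, the vertices h_i and h_{i+1} are adjacent in B, i.e., D_B(h_i, h_{i+1}) = 1. Equivalently, if some pair h_i, h_{i+1} with 1 ≤ i ≤ n+1 satisfies D_B(h_i, h_{i+1}) ≥ 2, then cost(B) ≥ C + 1. -/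
/-!
With `d₂ = (n² + n + 1)·(X + 2m + 1)`, the constant `C` satisfies `C + 1 = (n + 2)·d₂`, while the
`n + 1` pairs `h_i, h_{i+1}` alone contribute `d₂ · ∑ D_B(h_i, h_{i+1})` to the cost. So a cost of
at most `C` leaves a sum of at most `n + 1`, and as each of the `n + 1` distances is at least `1`
in a connected graph, they are all equal to `1`.
-/

open Finset SimpleGraph

lemma sum_comp_le_sum_of_injective {ι κ M : Type*} [Fintype ι] [AddCommMonoid M] [PartialOrder M]
    [IsOrderedAddMonoid M] [CanonicallyOrderedAdd M] {e : ι → κ} (he : Function.Injective e)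
    {s : Finset κ} (hs : ∀ i, e i ∈ s) (f : κ → M) : ∑ i, f (e i) ≤ ∑ j ∈ s, f j :=
  calc
    ∑ i, f (e i) = ∑ j ∈ univ.map ⟨e, he⟩, f j := (sum_map univ ⟨e, he⟩ f).symm
    _ ≤ ∑ j ∈ s, f j := sum_le_sum_of_subset (by simpa [subset_iff] using hs)

lemma sym2_castSucc_succ_injective (k : ℕ) :
    Function.Injective fun i : Fin k => s(i.castSucc, i.succ) := by
  intro i j hij
  simp only [Sym2.eq_iff, Fin.ext_iff, Fin.val_castSucc, Fin.val_succ] at hij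
  omega

lemma sum_dist_le_iff_forall_adj {V : Type*} {B : SimpleGraph V} (hB : B.Connected) {k : ℕ}
    {u : Fin (k + 1) → V} (hu : ∀ i : Fin k, u i.castSucc ≠ u i.succ) :
    ∑ i : Fin k, B.dist (u i.castSucc) (u i.succ) ≤ k ↔
      ∀ i : Fin k, B.Adj (u i.castSucc) (u i.succ) := by
  have one_le_dist (i : Fin k) : 1 ≤ B.dist (u i.castSucc) (u i.succ) :=
    hB.pos_dist_of_ne (hu i)
  have card_le_sum : k ≤ ∑ i : Fin k, B.dist (u i.castSucc) (u i.succ) := by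
    simpa using sum_le_sum fun i (_ : i ∈ univ) => one_le_dist i
  calc
    _ ↔ k = ∑ i : Fin k, B.dist (u i.castSucc) (u i.succ) := card_le_sum.ge_iff_eq
    _ ↔ ∀ i : Fin k, 1 = B.dist (u i.castSucc) (u i.succ) := by
      simpa using sum_eq_sum_iff_of_le fun i (_ : i ∈ univ) => one_le_dist i
    _ ↔ ∀ i : Fin k, B.Adj (u i.castSucc) (u i.succ) :=
      forall_congr' fun i => eq_comm.trans dist_eq_one_iff_adj

/-- The demand `d₂` between consecutive vertices of `H`. -/
def pathDemand (n m X : ℕ) : ℕ := (n ^ 2 + n + 1) * (X + 2 * m + 1)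

lemma demand_inr_castSucc_succ (n m X : ℕ) (G : SimpleGraph (Fin n)) [DecidableRel G.Adj]
    (i : Fin (n + 1)) :
    demand n m X G (Sum.inr i.castSucc) (Sum.inr i.succ) = pathDemand n m X := by
  simp [demand, pathDemand]

lemma Cbound_add_one (n m X : ℕ) : Cbound n m X + 1 = pathDemand n m X * (n + 2) := by
  unfold Cbound pathDemand
  ring

lemma sum_demand_mul_dist_le_cost {n : ℕ} (m X : ℕ) (G : SimpleGraph (Fin n))
    [DecidableRel G.Adj] (B : SimpleGraph (Vtx n)) {ι : Type*} [Fintype ι] {u v : ι → Vtx n}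
    (huv : Function.Injective fun i => s(u i, v i)) :
    ∑ i, demand n m X G (u i) (v i) * B.dist (u i) (v i) ≤ cost n m X G B := by
  have pair_mem (i : ι) : s(u i, v i) ∈ (univ : Finset (Vtx n)).sym2 :=
    mk_mem_sym2_iff.mpr ⟨mem_univ _, mem_univ _⟩
  refine le_of_eq_of_le ?_ (sum_comp_le_sum_of_injective huv pair_mem _)
  simp only [Sym2.lift_mk]

lemma pathDemand_mul_sum_dist_le_cost {n : ℕ} (m X : ℕ) (G : SimpleGraph (Fin n))
    [DecidableRel G.Adj] (B : SimpleGraph (Vtx n)) :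
    pathDemand n m X * ∑ i : Fin (n + 1), B.dist (Sum.inr i.castSucc) (Sum.inr i.succ) ≤
      cost n m X G B := by
  have pairs_injective : Function.Injective fun i : Fin (n + 1) =>
      (s(Sum.inr i.castSucc, Sum.inr i.succ) : Sym2 (Vtx n)) :=
    (Sym2.map.injective Sum.inr_injective).comp (sym2_castSucc_succ_injective (n + 1))
  simpa only [demand_inr_castSucc_succ, ← mul_sum] using
    sum_demand_mul_dist_le_cost m X G B pairs_injective

lemma adj_of_cost_le_Cbound {n m X : ℕ} {G : SimpleGraph (Fin n)} [DecidableRel G.Adj]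
    {B : SimpleGraph (Vtx n)} (hB : B.Connected) (hcost : cost n m X G B ≤ Cbound n m X)
    (i : Fin (n + 1)) : B.Adj (Sum.inr i.castSucc) (Sum.inr i.succ) := by
  have mul_sum_lt : pathDemand n m X *
      ∑ i : Fin (n + 1), B.dist (Sum.inr i.castSucc) (Sum.inr i.succ) <
        pathDemand n m X * (n + 2) :=
    calc
      _ ≤ cost n m X G B := pathDemand_mul_sum_dist_le_cost m X G B
      _ < Cbound n m X + 1 := Nat.lt_succ_of_le hcost
      _ = _ := Cbound_add_one n m X
  have sum_le : ∑ i : Fin (n + 1), B.dist (Sum.inr i.castSucc) (Sum.inr i.succ) ≤ n + 1 :=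
    Nat.le_of_lt_succ (Nat.lt_of_mul_lt_mul_left mul_sum_lt)
  have consecutive_ne (i : Fin (n + 1)) : (Sum.inr i.castSucc : Vtx n) ≠ Sum.inr i.succ :=
    Sum.inr_injective.ne i.castSucc_lt_succ.ne
  exact (sum_dist_le_iff_forall_adj hB consecutive_ne).mp sum_le i

theorem h_path_in_cheap_tree_general (n X : ℕ) (G : SimpleGraph (Fin n)) [DecidableRel G.Adj]
    (B : SimpleGraph (Vtx n)) (hB : B.Connected) :
    (cost n G.edgeFinset.card X G B ≤ Cbound n G.edgeFinset.card X →
      ∀ i : Fin (n + 1), B.Adj (Sum.inr i.castSucc) (Sum.inr i.succ) ∧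
        B.dist (Sum.inr i.castSucc) (Sum.inr i.succ) = 1) ∧
    ((∃ i : Fin (n + 1), 2 ≤ B.dist (Sum.inr i.castSucc) (Sum.inr i.succ)) →
      Cbound n G.edgeFinset.card X + 1 ≤ cost n G.edgeFinset.card X G B) := by
  have adj_and_dist (hcost : cost n G.edgeFinset.card X G B ≤ Cbound n G.edgeFinset.card X)
      (i : Fin (n + 1)) : B.Adj (Sum.inr i.castSucc) (Sum.inr i.succ) ∧
        B.dist (Sum.inr i.castSucc) (Sum.inr i.succ) = 1 :=
    have hadj := adj_of_cost_le_Cbound hB hcost i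
    ⟨hadj, dist_eq_one_iff_adj.mpr hadj⟩
  refine ⟨adj_and_dist, fun ⟨i, hi⟩ => Nat.lt_of_not_le fun hcost => ?_⟩
  have hdist := (adj_and_dist hcost i).2
  omega

/-- Let `B` be a binary tree on `V ∪ H`.  If `cost(B) ≤ C`, then for
every `1 ≤ i ≤ n+1` the vertices `h_i` and `h_{i+1}` are adjacent in `B`, i.e.
`D_B(h_i, h_{i+1}) = 1` (0-indexed: `h_i` is `Sum.inr i.castSucc`, `h_{i+1}` is
`Sum.inr i.succ` for `i : Fin (n+1)`).  Equivalently, if some such pair satisfies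
`D_B(h_i, h_{i+1}) ≥ 2`, then `cost(B) ≥ C + 1`. -/
theorem h_path_in_cheap_tree (n m X : ℕ) (hn : 1 ≤ n) (G : SimpleGraph (Fin n))
    [DecidableRel G.Adj] (hm : G.edgeFinset.card = m)
    (B : SimpleGraph (Vtx n)) (hB : IsBinaryTree B) :
    (cost n m X G B ≤ Cbound n m X →
      ∀ i : Fin (n + 1), B.Adj (Sum.inr i.castSucc) (Sum.inr i.succ) ∧
        B.dist (Sum.inr i.castSucc) (Sum.inr i.succ) = 1) ∧
    ((∃ i : Fin (n + 1), 2 ≤ B.dist (Sum.inr i.castSucc) (Sum.inr i.succ)) →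
      Cbound n m X + 1 ≤ cost n m X G B) := by
  subst hm
  exact h_path_in_cheap_tree_general n X G B hB.1.connected
end

section
/- Let B be a binary tree on V ∪ H in which h_i and h_{i+1} are adjacent for every 1 ≤ i ≤ n+1 (so h_1, …, h_{n+2} form a path). Then for every v ∈ V, D_B(v, h_2) + D_B(v, h_{n+1}) ≥ n + 1, and equality holds if and only if v is adjacent in B to some h_j with 2 ≤ j ≤ n+1. -/
/-!
Let `p` be a path in a forest and `w` a vertex of `p` nearest to a given vertex `u`. A geodesic from
`u` to `w` meets `p` only in `w`, since its other vertices are closer to `u`. Following the geodesic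
and then `p` from `w` to either end is therefore a path, and in a forest every path is a geodesic.
So the distances from `u` to the two ends of `p` add up to the length of `p` plus `2 * dist u w`.
If `u` is not on `p`, then `dist u w ≥ 1`, with equality exactly when `u` has a neighbour on `p`.
The theorem is the case of the path `h_2, …, h_{n+1}`, which has length `n - 1`.
-/

open Finset SimpleGraph

section Nearest

variable {W : Type*} {G : SimpleGraph W} {u w x y z : W}

theorem length_eq_dist_of_isAcyclic (hG : G.IsAcyclic) {p : G.Walk x y} (hp : p.IsPath) :
    p.length = G.dist x y := by
  obtain ⟨q, hq, hlen⟩ := p.reachable.exists_path_of_dist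
  have hpq : p = q := congrArg Subtype.val ((hG.subsingleton_path x y).elim ⟨p, hp⟩ ⟨q, hq⟩)
  rw [hpq, hlen]

theorem isPath_append_of_nearest {g : G.Walk u w} {q : G.Walk w z} (hg : g.length = G.dist u w)
    (hq : q.IsPath) (hw : ∀ s ∈ q.support, G.dist u w ≤ G.dist u s) : (g.append q).IsPath := by
  classical
  have hgpath : g.IsPath := g.isPath_of_length_eq_dist hg
  have hmeet : ∀ s ∈ g.support, s ∈ q.support → s = w := by
    intro s hsg hsq
    by_contra hne
    have hlt : G.dist u s < g.length :=
      (dist_le _).trans_lt (Walk.length_takeUntil_lt_length hsg hne)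
    exact (hlt.trans_le (hg.trans_le (hw s hsq))).false
  rw [Walk.isPath_def, Walk.support_append, List.nodup_append']
  refine ⟨hgpath.support_nodup, hq.support_nodup.tail, fun s hsg hsq => ?_⟩
  obtain rfl : s = w := hmeet s hsg (List.mem_of_mem_tail hsq)
  exact List.nodup_cons.1 (q.cons_tail_support ▸ hq.support_nodup) |>.1 hsq

theorem dist_eq_dist_add_length_of_nearest (hG : G.IsAcyclic) (hu : G.Reachable u w)
    {q : G.Walk w z} (hq : q.IsPath) (hw : ∀ s ∈ q.support, G.dist u w ≤ G.dist u s) :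
    G.dist u z = G.dist u w + q.length := by
  obtain ⟨g, hg⟩ := hu.exists_walk_length_eq_dist
  rw [← length_eq_dist_of_isAcyclic hG (isPath_append_of_nearest hg hq hw), Walk.length_append, hg]

theorem dist_add_dist_eq_of_nearest (hG : G.IsAcyclic) {p : G.Walk x y} (hp : p.IsPath)
    (hu : G.Reachable u w) (hwp : w ∈ p.support)
    (hw : ∀ s ∈ p.support, G.dist u w ≤ G.dist u s) :
    G.dist u x + G.dist u y = p.length + 2 * G.dist u w := by
  classical
  have hx : G.dist u x = G.dist u w + (p.takeUntil w hwp).reverse.length :=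
    dist_eq_dist_add_length_of_nearest hG hu (hp.takeUntil hwp).reverse fun s hs =>
      hw s (p.support_takeUntil_subset_support hwp (by simpa using hs))
  have hy : G.dist u y = G.dist u w + (p.dropUntil w hwp).length :=
    dist_eq_dist_add_length_of_nearest hG hu (hp.dropUntil hwp) fun s hs =>
      hw s (p.support_dropUntil_subset_support hwp hs)
  have hlen : (p.takeUntil w hwp).length + (p.dropUntil w hwp).length = p.length := by
    rw [← Walk.length_append, Walk.take_spec]
  rw [Walk.length_reverse] at hx
  omega

end Nearest

theorem exists_walk_support_eq_ofFn {W : Type*} {G : SimpleGraph W} {m : ℕ} {h : Fin (m + 1) → W}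
    (hadj : ∀ i : Fin m, G.Adj (h i.castSucc) (h i.succ)) :
    ∃ p : G.Walk (h 0) (h (Fin.last m)), p.support = List.ofFn h := by
  induction m with
  | zero => exact ⟨.nil, by simp⟩
  | succ m ih =>
    obtain ⟨p, hp⟩ := ih (h := fun i => h i.succ) fun i => hadj i.succ
    exact ⟨.cons (hadj 0) p, by rw [List.ofFn_succ, ← hp]; rfl⟩

theorem exists_castSucc_succ_iff {m : ℕ} {P : Fin (m + 2) → Prop} :
    (∃ i : Fin m, P i.castSucc.succ) ↔ ∃ j, 1 ≤ j.val ∧ j.val ≤ m ∧ P j := by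
  simp [Fin.exists_iff_succ (n := m + 1), Fin.exists_iff_castSucc (n := m), Nat.succ_le_iff]

theorem dist_to_h_ends_general {W : Type*} {G : SimpleGraph W} (hG : G.IsAcyclic) {m : ℕ}
    {h : Fin (m + 1) → W} (hinj : Function.Injective h)
    (hadj : ∀ i : Fin m, G.Adj (h i.castSucc) (h i.succ)) {v : W} (hv : v ∉ Set.range h)
    (hreach : G.Reachable v (h 0)) :
    m + 2 ≤ G.dist v (h 0) + G.dist v (h (Fin.last m)) ∧
      (G.dist v (h 0) + G.dist v (h (Fin.last m)) = m + 2 ↔ ∃ i, G.Adj v (h i)) := by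
  classical
  obtain ⟨p, hsupp⟩ := exists_walk_support_eq_ofFn hadj
  have hp : p.IsPath := Walk.IsPath.mk' (hsupp ▸ List.nodup_ofFn.2 hinj)
  have hlen : p.length = m := by simpa [hsupp] using p.length_support.symm
  obtain ⟨i, hi⟩ := Finite.exists_min fun i => G.dist v (h i)
  have hip : h i ∈ p.support := hsupp ▸ List.mem_ofFn.2 ⟨i, rfl⟩
  have hvi : G.Reachable v (h i) := hreach.trans (p.takeUntil (h i) hip).reachable
  have hpos : 0 < G.dist v (h i) := hvi.pos_dist_of_ne fun heq => hv ⟨i, heq.symm⟩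
  have hsum : G.dist v (h 0) + G.dist v (h (Fin.last m)) = p.length + 2 * G.dist v (h i) :=
    dist_add_dist_eq_of_nearest hG hp hvi hip (hsupp ▸ List.forall_mem_ofFn_iff.2 hi)
  refine ⟨by omega, fun heq => ⟨i, dist_eq_one_iff_adj.1 (by omega)⟩, fun ⟨j, hj⟩ => ?_⟩
  have hj_one : G.dist v (h j) = 1 := dist_eq_one_iff_adj.2 hj
  have hle : G.dist v (h i) ≤ G.dist v (h j) := hi j
  omega

/-- Let `B` be a binary tree on `V ∪ H` in which consecutive `h`'s are
adjacent (so `h_1, …, h_{n+2}` form a path).  Then for every `v ∈ V`,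
`D_B(v, h_2) + D_B(v, h_{n+1}) ≥ n + 1`, with equality iff `v` is adjacent in `B` to some
`h_j` with `2 ≤ j ≤ n+1` (0-indexed `j`: `1 ≤ j ≤ n`). -/
theorem dist_to_h_ends (n : ℕ) (hn : 1 ≤ n) (B : SimpleGraph (Vtx n))
    (hB : IsBinaryTree B)
    (hpath : ∀ i : Fin (n + 1), B.Adj (Sum.inr i.castSucc) (Sum.inr i.succ))
    (v : Fin n) :
    n + 1 ≤ B.dist (Sum.inl v) (Sum.inr ⟨1, by omega⟩) +
      B.dist (Sum.inl v) (Sum.inr ⟨n, by omega⟩) ∧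
    (B.dist (Sum.inl v) (Sum.inr ⟨1, by omega⟩) +
        B.dist (Sum.inl v) (Sum.inr ⟨n, by omega⟩) = n + 1 ↔
      ∃ j : Fin (n + 2), 1 ≤ j.val ∧ j.val ≤ n ∧ B.Adj (Sum.inl v) (Sum.inr j)) := by
  obtain ⟨m, rfl⟩ := Nat.exists_eq_add_of_le' hn
  rw [← exists_castSucc_succ_iff (P := fun j => B.Adj (Sum.inl v) (Sum.inr j))]
  exact dist_to_h_ends_general hB.1.isAcyclic (h := fun i => Sum.inr i.castSucc.succ)
    (fun i j hij => by simpa using hij) (fun i => hpath i.succ.castSucc) (by simp)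
    (hB.1.connected _ _)
end

section
/- Fix integers n ≥ 2 and 2 ≤ u ≤ n. The number of permutations π of {1, …, n} that are not the lexicographically last permutation and whose immediate lexicographic successor σ agrees with π in positions 1, …, n−u and differs from π in position n−u+1, equals (u − 1)·binom(n, u)·(n − u)!. Equivalently, this is the number of permutations π whose length-u suffix (π(n−u+1), π(n−u+2), …, π(n)) satisfies π(n−u+2) > π(n−u+3) > … > π(n) and π(n−u+1) < π(n−u+2). -/
/-!
Let `π` be a permutation and `t` an initial segment of positions. Some permutation greater than `π`
agrees with `π` on `t` exactly when `π` is not strictly decreasing off `t`: a position off `t` whose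
value can be raised gives an ascent off `t`, and swapping the two values of an ascent gives a
greater permutation. Since lexicographic order compares initial segments first, the successor of `π`
agrees with `π` on `t` as soon as some greater permutation does. Hence the successor first differs
from `π` at position `k` if and only if `π` decreases on the positions `> k` but not on those `≥ k`.

A permutation that decreases off `t` is determined by its values on `t`, which can be any distinct
values, so the count is a difference of two falling factorials.
-/

open Finset

/-- Strict lexicographic order on sequences `(f 0, …, f (n-1))`. -/
def LexLt {n : ℕ} (f g : Fin n → Fin n) : Prop :=
  ∃ i : Fin n, (∀ j : Fin n, j < i → f j = g j) ∧ f i < g i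

/-- `σ` is the immediate lexicographic successor of `π`: it is lexicographically greater
than `π`, and it is `≤` every permutation that is lexicographically greater than `π`. -/
def IsLexSucc {n : ℕ} (π σ : Equiv.Perm (Fin n)) : Prop :=
  LexLt ⇑π ⇑σ ∧ ∀ τ : Equiv.Perm (Fin n), LexLt ⇑π ⇑τ → σ = τ ∨ LexLt ⇑σ ⇑τ

section Lex

variable {ι α : Type*} [LinearOrder ι]

theorem eqOn_of_toLex_le_of_toLex_le [PartialOrder α] {f g h : ι → α} {t : Set ι}
    (hfh : Set.EqOn f h t) (ht : IsLowerSet t) (hfg : toLex f ≤ toLex g)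
    (hgh : toLex g ≤ toLex h) : Set.EqOn f g t := by
  rcases hfg.eq_or_lt with heq | ⟨i, hagree, hi⟩
  · rw [toLex_inj.mp heq]
    exact Set.eqOn_refl g t
  · refine fun j hj => hagree j (lt_of_not_ge fun hij => ?_)
    have hlower {l : ι} (hl : l ≤ i) : f l = h l := hfh (ht (hl.trans hij) hj)
    have hhg : toLex h < toLex g :=
      ⟨i, fun l hl => (hlower hl.le).symm.trans (hagree l hl), (hlower le_rfl).symm.trans_lt hi⟩
    exact hhg.not_ge hgh

theorem toLex_lt_toLex_comp_swap [LT α] {f : ι → α} {i j : ι} (hij : i < j) (h : f i < f j) :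
    toLex f < toLex (f ∘ Equiv.swap i j) := by
  refine ⟨i, fun l hl => ?_, by simpa using h⟩
  simp [Equiv.swap_apply_of_ne_of_ne hl.ne (hl.trans hij).ne]

theorem exists_toLex_lt_and_eqOn_iff [LinearOrder α] (π : ι ≃ α) (t : Set ι) :
    (∃ τ : ι ≃ α, toLex ⇑π < toLex ⇑τ ∧ Set.EqOn π τ t) ↔ ¬ StrictAntiOn π tᶜ := by
  constructor
  · rintro ⟨τ, ⟨i, hagree, hi⟩, hτ⟩ hanti
    have hit : i ∉ t := fun hit => hi.ne (hτ hit)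
    obtain ⟨j, hj : π j = τ i⟩ := π.surjective (τ i)
    have hij : π i < π j := hi.trans_eq hj.symm
    have agree_imp_eq (h : π j = τ j) : j = i := τ.injective (h.symm.trans hj)
    have hjt : j ∉ t := fun hjt => hij.ne' (congrArg π (agree_imp_eq (hτ hjt)))
    have hji : j < i := (hanti.lt_iff_gt hit hjt).mp hij
    exact hji.ne (agree_imp_eq (hagree j hji))
  · intro hanti
    obtain ⟨i, hi, j, hj, hij, hle⟩ : ∃ i ∈ tᶜ, ∃ j ∈ tᶜ, i < j ∧ π i ≤ π j := by
      simpa [StrictAntiOn] using hanti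
    have hlt : π i < π j := hle.lt_of_ne (π.injective.ne hij.ne)
    refine ⟨(Equiv.swap i j).trans π, toLex_lt_toLex_comp_swap hij hlt, fun l hl => ?_⟩
    rw [Equiv.trans_apply, Equiv.swap_apply_of_ne_of_ne] <;> rintro rfl <;> contradiction

end Lex

section Successor

variable {n : ℕ} {π σ : Equiv.Perm (Fin n)}

theorem isLexSucc_iff : IsLexSucc π σ ↔ toLex ⇑π < toLex ⇑σ ∧
    ∀ τ : Equiv.Perm (Fin n), toLex ⇑π < toLex ⇑τ → toLex ⇑σ ≤ toLex ⇑τ := by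
  simp only [le_iff_eq_or_lt, toLex_inj, DFunLike.coe_fn_eq]
  rfl

theorem exists_isLexSucc_iff :
    (∃ σ, IsLexSucc π σ) ↔ ∃ τ : Equiv.Perm (Fin n), toLex ⇑π < toLex ⇑τ := by
  refine ⟨fun ⟨σ, hσ⟩ => ⟨σ, hσ.1⟩, fun hτ => ?_⟩
  obtain ⟨σ, hσ⟩ := Set.exists_min_image {τ : Equiv.Perm (Fin n) | toLex ⇑π < toLex ⇑τ}
    (fun τ => toLex ⇑τ) (Set.toFinite _) hτ
  exact ⟨σ, isLexSucc_iff.mpr hσ⟩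

theorem IsLexSucc.eqOn_iff (hσ : IsLexSucc π σ) {t : Set (Fin n)} (ht : IsLowerSet t) :
    Set.EqOn π σ t ↔ ¬ StrictAntiOn π tᶜ := by
  obtain ⟨hlt, hmin⟩ := isLexSucc_iff.mp hσ
  rw [← exists_toLex_lt_and_eqOn_iff]
  exact ⟨fun h => ⟨σ, hlt, h⟩,
    fun ⟨τ, hπτ, hτ⟩ => eqOn_of_toLex_le_of_toLex_le hτ ht hlt.le (hmin τ hπτ)⟩

theorem IsLexSucc.eqOn_Iio_and_ne_iff (hσ : IsLexSucc π σ) (k : Fin n) :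
    Set.EqOn π σ (Set.Iio k) ∧ π k ≠ σ k ↔
      StrictAntiOn π (Set.Ioi k) ∧ ¬ StrictAntiOn π (Set.Ici k) := by
  have hIio := hσ.eqOn_iff (isLowerSet_Iio k)
  have hIic := hσ.eqOn_iff (isLowerSet_Iic k)
  rw [Set.compl_Iio] at hIio
  rw [Set.compl_Iic, ← Set.Iio_union_right, Set.eqOn_union, Set.eqOn_singleton] at hIic
  tauto

theorem exists_isLexSucc_eqOn_Iio_and_ne_iff (k : Fin n) :
    (∃ σ, IsLexSucc π σ ∧ Set.EqOn π σ (Set.Iio k) ∧ π k ≠ σ k) ↔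
      StrictAntiOn π (Set.Ioi k) ∧ ¬ StrictAntiOn π (Set.Ici k) := by
  refine ⟨fun ⟨σ, hσ, h⟩ => (hσ.eqOn_Iio_and_ne_iff k).mp h, fun h => ?_⟩
  obtain ⟨τ, hτ, -⟩ := (exists_toLex_lt_and_eqOn_iff π (Set.Iio k)).mpr
    (by rw [Set.compl_Iio]; exact h.2)
  obtain ⟨σ, hσ⟩ := exists_isLexSucc_iff.mpr ⟨τ, hτ⟩
  exact ⟨σ, hσ, (hσ.eqOn_Iio_and_ne_iff k).mpr h⟩

end Successor

section StrictAntiOn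

variable {α β : Type*} [LinearOrder α]

theorem strictAntiOn_Ici_iff_of_covBy [Preorder β] {f : α → β} {a b : α} (h : a ⋖ b) :
    StrictAntiOn f (Set.Ici a) ↔ StrictAntiOn f (Set.Ici b) ∧ f b < f a := by
  rw [← Set.Ioi_insert, strictAntiOn_insert_iff_of_forall_ge (s := Set.Ioi a) (fun _ => le_of_lt),
    h.Ioi_eq, and_comm]
  exact and_congr_right fun hf => ⟨fun hlt => hlt b Set.self_mem_Ici h.lt,
    fun hba x hx _ => (hf.antitoneOn Set.self_mem_Ici hx hx).trans_lt hba⟩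

theorem strictAntiOn_Ioi_and_not_Ici_iff_of_covBy [LinearOrder β] {f : α → β}
    (hf : Function.Injective f) {a b : α} (h : a ⋖ b) :
    StrictAntiOn f (Set.Ioi a) ∧ ¬ StrictAntiOn f (Set.Ici a) ↔
      StrictAntiOn f (Set.Ici b) ∧ f a < f b := by
  have hlt : ¬ f b < f a ↔ f a < f b := not_lt.trans (hf.ne h.lt.ne).le_iff_lt
  rw [h.Ioi_eq, strictAntiOn_Ici_iff_of_covBy h, ← hlt]
  tauto

theorem equiv_ext_of_strictAntiOn_compl [WellFoundedGT α] [PartialOrder β] {e e' : α ≃ β}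
    {t : Set α} (h : Set.EqOn e e' t) (he : StrictAntiOn e tᶜ) (he' : StrictAntiOn e' tᶜ) :
    e = e' := by
  have hrange : Set.range (tᶜ.domRestrict e) = Set.range (tᶜ.domRestrict e') := by
    rw [Set.range_domRestrict, Set.range_domRestrict, Set.image_compl_eq e.bijective,
      Set.image_compl_eq e'.bijective, h.image_eq]
  have strictAnti_domRestrict {f : α → β} (hf : StrictAntiOn f tᶜ) :
      StrictAnti (tᶜ.domRestrict f) := fun x y hxy => hf x.2 y.2 hxy
  have hcompl : Set.EqOn e e' tᶜ := Set.domRestrict_eq_domRestrict_iff.mp <|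
    ((strictAnti_domRestrict he).range_inj (strictAnti_domRestrict he')).mp hrange
  exact Equiv.ext fun x => (em (x ∈ t)).elim (h ·) (hcompl ·)

variable [LinearOrder β] [Finite α] [Finite β]

theorem nonempty_orderIso_of_natCard_eq (h : Nat.card α = Nat.card β) : Nonempty (α ≃o β) := by
  have := Fintype.ofFinite α
  have := Fintype.ofFinite β
  rw [Nat.card_eq_fintype_card, Nat.card_eq_fintype_card] at h
  exact ⟨(Fintype.orderIsoFinOfCardEq α h).symm.trans (Fintype.orderIsoFinOfCardEq β rfl)⟩

theorem exists_equiv_strictAntiOn_compl (h : Nat.card α = Nat.card β) {t : Set α} (f : t ↪ β) :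
    ∃ e : α ≃ β, StrictAntiOn e tᶜ ∧ ∀ x : t, e x = f x := by
  classical
  let u : Set β := Set.range f
  let f' : t ≃ u := Equiv.ofInjective f f.injective
  have hcard : Nat.card ↥tᶜ = Nat.card (↥uᶜ)ᵒᵈ := by
    have htu : t.ncard = u.ncard := Nat.card_congr f'
    calc Nat.card ↥tᶜ = Nat.card α - t.ncard := Set.ncard_compl t
      _ = Nat.card β - u.ncard := by rw [h, htu]
      _ = uᶜ.ncard := (Set.ncard_compl u).symm
  obtain ⟨g⟩ := nonempty_orderIso_of_natCard_eq hcard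
  let g' : ↥tᶜ ≃ ↥uᶜ := g.toEquiv.trans OrderDual.ofDual
  let e := (Equiv.Set.compl f').symm g'
  have he (x : ↥tᶜ) : e.1 x = g' x :=
    congrArg Subtype.val (DFunLike.congr_fun ((Equiv.Set.compl f').apply_symm_apply g') x)
  refine ⟨e, fun x hx y hy hxy => ?_, e.2⟩
  rw [he ⟨x, hx⟩, he ⟨y, hy⟩]
  exact g.strictMono hxy

theorem ncard_strictAntiOn_compl (h : Nat.card α = Nat.card β) (t : Set α) :
    {e : α ≃ β | StrictAntiOn e tᶜ}.ncard = (Nat.card β).descFactorial t.ncard := by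
  have hbij : Set.BijOn (fun e : α ≃ β => (Function.Embedding.subtype (· ∈ t)).trans e.toEmbedding)
      {e | StrictAntiOn e tᶜ} Set.univ := by
    refine ⟨fun _ _ => Set.mem_univ _, fun e he e' he' heq => ?_, fun f _ => ?_⟩
    · exact equiv_ext_of_strictAntiOn_compl (fun x hx => DFunLike.congr_fun heq ⟨x, hx⟩) he he'
    · obtain ⟨e, he, hef⟩ := exists_equiv_strictAntiOn_compl h f
      exact ⟨e, he, DFunLike.ext _ _ hef⟩
  have := Fintype.ofFinite t
  have := Fintype.ofFinite β
  rw [hbij.ncard_eq, Set.ncard_univ, Nat.card_eq_fintype_card, Fintype.card_embedding_eq,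
    ← Nat.card_eq_fintype_card, ← Nat.card_eq_fintype_card, Nat.card_coe_set_eq]

theorem ncard_strictAntiOn_Ioi_and_not_Ici {n : ℕ} (k : Fin n) :
    {π : Equiv.Perm (Fin n) | StrictAntiOn π (Set.Ioi k) ∧ ¬ StrictAntiOn π (Set.Ici k)}.ncard =
      (n - k - 1) * n.choose k * (k : ℕ).factorial := by
  have hIci : {π : Equiv.Perm (Fin n) | StrictAntiOn π (Set.Ici k)}.ncard =
      n.descFactorial k := by
    rw [← Set.compl_Iio, ncard_strictAntiOn_compl rfl, ← Finset.coe_Iio, Set.ncard_coe_finset,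
      Fin.card_Iio, Nat.card_fin]
  have hIoi : {π : Equiv.Perm (Fin n) | StrictAntiOn π (Set.Ioi k)}.ncard =
      n.descFactorial (k + 1) := by
    rw [← Set.compl_Iic, ncard_strictAntiOn_compl rfl, ← Finset.coe_Iic, Set.ncard_coe_finset,
      Fin.card_Iic, Nat.card_fin]
  have hsub : {π : Equiv.Perm (Fin n) | StrictAntiOn π (Set.Ici k)} ⊆
      {π | StrictAntiOn π (Set.Ioi k)} := fun π hπ => hπ.mono Set.Ioi_subset_Ici_self
  calc _ = n.descFactorial (k + 1) - n.descFactorial k := by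
        rw [← hIoi, ← hIci, ← Set.ncard_sdiff hsub]; rfl
    _ = (n - k - 1) * n.descFactorial k := by
        rw [Nat.descFactorial_succ, ← Nat.sub_one_mul]
    _ = (n - k - 1) * n.choose k * (k : ℕ).factorial := by
        rw [Nat.descFactorial_eq_factorial_mul_choose, mul_comm (k : ℕ).factorial, mul_assoc]

end StrictAntiOn

/-- Fix `2 ≤ u ≤ n`.  The number of permutations `π` of `{1, …, n}`
that are not lexicographically last and whose immediate lexicographic successor agrees
with `π` in positions `1, …, n−u` and differs in position `n−u+1` (0-indexed: agrees at
indices `< n−u`, differs at index `n−u`) equals `(u−1)·binom(n,u)·(n−u)!`.  Equivalently,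
this is the number of permutations whose length-`u` suffix satisfies
`π(n−u+2) > π(n−u+3) > ⋯ > π(n)` and `π(n−u+1) < π(n−u+2)` (0-indexed: `π` is strictly
decreasing on indices `≥ n−u+1`, and `π(n−u) < π(n−u+1)`). -/
theorem count_succ_suffix (n u : ℕ) (hn : 2 ≤ n) (hu2 : 2 ≤ u) (hun : u ≤ n) :
    {π : Equiv.Perm (Fin n) | ∃ σ : Equiv.Perm (Fin n), IsLexSucc π σ ∧
        (∀ i : Fin n, i.val < n - u → π i = σ i) ∧
        π ⟨n - u, by omega⟩ ≠ σ ⟨n - u, by omega⟩}.ncard =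
      (u - 1) * Nat.choose n u * Nat.factorial (n - u) ∧
    {π : Equiv.Perm (Fin n) | (∀ i j : Fin n, n - u + 1 ≤ i.val → i < j → π j < π i) ∧
        π ⟨n - u, by omega⟩ < π ⟨n - u + 1, by omega⟩}.ncard =
      (u - 1) * Nat.choose n u * Nat.factorial (n - u) := by
  let k : Fin n := ⟨n - u, by omega⟩
  let l : Fin n := ⟨n - u + 1, by omega⟩
  have hkl : k ⋖ l := by simp [k, l]
  have hcount : {π : Equiv.Perm (Fin n) |
      StrictAntiOn π (Set.Ioi k) ∧ ¬ StrictAntiOn π (Set.Ici k)}.ncard =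
      (u - 1) * n.choose u * (n - u).factorial := by
    rw [ncard_strictAntiOn_Ioi_and_not_Ici, Nat.choose_symm hun, Nat.sub_sub_self hun]
  constructor <;> rw [← hcount] <;> congr 1 <;> ext π
  · exact exists_isLexSucc_eqOn_Iio_and_ne_iff k
  · have hanti : (∀ i j, l ≤ i → i < j → π j < π i) ↔ StrictAntiOn π (Set.Ici l) :=
      ⟨fun h i hi j _ hij => h i j hi hij, fun h i j hi hij => h hi (hi.trans hij.le) hij⟩
    exact (and_congr_left' hanti).trans
      (strictAntiOn_Ioi_and_not_Ici_iff_of_covBy π.injective hkl).symm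
end

section
/- For every integer n ≥ 2, Σ_{u=2}^{n} u·(u−1)·binom(n, u)·(n−u)! = Σ_{u=2}^{n} n!/(u−2)!, and this quantity is strictly less than e·n!. Consequently, the average length of the changed suffix between consecutive permutations of {1, …, n} in lexicographic order is less than e. -/
/-!
Since `n! = binom(n,u)·u!·(n−u)!` and `u! = u·(u−1)·(u−2)!`, each term of the sum is `n!/(u−2)!`,
so the sum is `n!` times the partial sum `Σ_{k ≤ n−2} 1/k!` of the series of `e`. The next two
terms of that series, multiplied by `n!`, contribute `n + 1`. As `n + 1 ≥ 3 > e`, the sum is even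
less than `e·(n! − 1)`, which bounds the average.
-/

open Finset

open scoped Nat

section DescFactorial

lemma descFactorial_two (n : ℕ) : n.descFactorial 2 = n * (n - 1) := by
  rw [Nat.descFactorial_succ, Nat.descFactorial_one, mul_comm]

variable {n u r : ℕ}

lemma descFactorial_mul_choose_mul_factorial_mul_factorial (hr : r ≤ u) (hu : u ≤ n) :
    u.descFactorial r * n.choose u * (n - u)! * (u - r)! = n ! :=
  calc
    u.descFactorial r * n.choose u * (n - u)! * (u - r)!
        = n.choose u * ((u - r)! * u.descFactorial r) * (n - u)! := by ring
    _ = n.choose u * u ! * (n - u)! := by rw [Nat.factorial_mul_descFactorial hr]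
    _ = n ! := Nat.choose_mul_factorial_mul_factorial hu

lemma descFactorial_mul_choose_mul_factorial (hr : r ≤ u) (hu : u ≤ n) :
    u.descFactorial r * n.choose u * (n - u)! = n ! / (u - r)! :=
  Nat.eq_div_of_mul_eq_left (Nat.factorial_ne_zero _)
    (descFactorial_mul_choose_mul_factorial_mul_factorial hr hu)

lemma sum_descFactorial_mul_choose_mul_factorial (n r : ℕ) :
    ∑ u ∈ Icc r n, u.descFactorial r * n.choose u * (n - u)! =
      ∑ u ∈ Icc r n, n ! / (u - r)! :=
  sum_congr rfl fun _ hu ↦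
    descFactorial_mul_choose_mul_factorial (mem_Icc.mp hu).1 (mem_Icc.mp hu).2

end DescFactorial

section Field

variable {K : Type*} [Field K] [CharZero K]

lemma cast_factorial_div_factorial {n k : ℕ} (hk : k ≤ n) :
    ((n ! / k ! : ℕ) : K) = n ! * (k ! : K)⁻¹ := by
  rw [Nat.cast_div_charZero (Nat.factorial_dvd_factorial hk), div_eq_mul_inv]

lemma cast_sum_factorial_div_factorial (n r : ℕ) :
    ((∑ u ∈ Icc r n, n ! / (u - r)! : ℕ) : K) =
      n ! * ∑ k ∈ range (n + 1 - r), (k ! : K)⁻¹ := by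
  rw [← Ico_add_one_right_eq_Icc, sum_Ico_eq_sum_range, Nat.cast_sum, mul_sum]
  refine sum_congr rfl fun k hk ↦ ?_
  have hkn : k ≤ n := by
    have := mem_range.mp hk
    lia
  rw [Nat.add_sub_cancel_left, cast_factorial_div_factorial hkn]

lemma factorial_succ_mul_sum_range_add_two_inv_factorial (m : ℕ) :
    ((m + 1)! : K) * ∑ k ∈ range (m + 2), (k ! : K)⁻¹ =
      (m + 1)! * ∑ k ∈ range m, (k ! : K)⁻¹ + (m + 2) := by
  have hm : (m ! : K) ≠ 0 := Nat.cast_ne_zero.mpr (Nat.factorial_ne_zero m)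
  have hm' : ((m + 1)! : K) ≠ 0 := Nat.cast_ne_zero.mpr (Nat.factorial_ne_zero (m + 1))
  have hsucc : ((m + 1)! : K) * (m ! : K)⁻¹ = m + 1 := by
    rw [Nat.factorial_succ, Nat.cast_mul, mul_inv_cancel_right₀ hm, Nat.cast_succ]
  rw [sum_range_succ, sum_range_succ, mul_add, mul_add, hsucc, mul_inv_cancel₀ hm']
  ring

end Field

lemma sum_range_inv_factorial_le_exp_one (m : ℕ) :
    ∑ k ∈ range m, (k ! : ℝ)⁻¹ ≤ Real.exp 1 := by
  simpa only [one_pow, one_div] using Real.sum_le_exp_of_nonneg zero_le_one m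

lemma factorial_succ_mul_sum_range_inv_factorial_lt {m : ℕ} (hm : 1 ≤ m) :
    ((m + 1)! : ℝ) * ∑ k ∈ range m, (k ! : ℝ)⁻¹ < Real.exp 1 * ((m + 1)! - 1) := by
  have hpartial : ((m + 1)! : ℝ) * ∑ k ∈ range m, (k ! : ℝ)⁻¹ + (m + 2) ≤
      (m + 1)! * Real.exp 1 := by
    rw [← factorial_succ_mul_sum_range_add_two_inv_factorial]
    gcongr
    exact sum_range_inv_factorial_le_exp_one (m + 2)
  have hslack : Real.exp 1 < m + 2 := by
    have hm' : (1 : ℝ) ≤ m := Nat.one_le_cast.mpr hm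
    linarith [Real.exp_one_lt_three]
  linarith

lemma sum_factorial_div_factorial_sub_two_lt {n : ℕ} (hn : 2 ≤ n) :
    ((∑ u ∈ Icc 2 n, n ! / (u - 2)! : ℕ) : ℝ) < Real.exp 1 * ((n ! : ℝ) - 1) := by
  obtain ⟨m, rfl⟩ := Nat.exists_eq_add_of_le' (Nat.one_le_of_lt hn)
  rw [cast_sum_factorial_div_factorial, show m + 1 + 1 - 2 = m from rfl]
  exact factorial_succ_mul_sum_range_inv_factorial_lt (Nat.le_of_succ_le_succ hn)

/-- For every `n ≥ 2`,
`Σ_{u=2}^{n} u·(u−1)·binom(n,u)·(n−u)! = Σ_{u=2}^{n} n!/(u−2)!` (the division is exact),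
this quantity is strictly less than `e·n!`, and consequently the average length of the
changed suffix between consecutive permutations in lexicographic order — the above sum
(total suffix length over all `n! − 1` consecutive pairs) divided by `n! − 1` — is less
than `e`. -/
theorem suffix_length_sum (n : ℕ) (hn : 2 ≤ n) :
    (∑ u ∈ Finset.Icc 2 n, u * (u - 1) * Nat.choose n u * Nat.factorial (n - u)) =
      (∑ u ∈ Finset.Icc 2 n, Nat.factorial n / Nat.factorial (u - 2)) ∧
    ((∑ u ∈ Finset.Icc 2 n, u * (u - 1) * Nat.choose n u * Nat.factorial (n - u) : ℕ) : ℝ) <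
      Real.exp 1 * Nat.factorial n ∧
    ((∑ u ∈ Finset.Icc 2 n, u * (u - 1) * Nat.choose n u * Nat.factorial (n - u) : ℕ) : ℝ) /
      ((Nat.factorial n : ℝ) - 1) < Real.exp 1 := by
  have hsum := sum_descFactorial_mul_choose_mul_factorial n 2
  simp only [descFactorial_two] at hsum
  have hlt := sum_factorial_div_factorial_sub_two_lt hn
  rw [← hsum] at hlt
  have hfact : (1 : ℝ) < n ! := Nat.one_lt_cast.mpr (Nat.one_lt_factorial.mpr hn)
  refine ⟨hsum, ?_, ?_⟩
  · exact hlt.trans (mul_lt_mul_of_pos_left (sub_one_lt _) (Real.exp_pos 1))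
  · exact (div_lt_iff₀ (sub_pos.mpr hfact)).mpr hlt
end

section
/- Let T be a finite tree on vertex set S, let {u, v} be an edge of T, and let U and V' be the vertex sets of the components of T − {u, v} containing u and v respectively. Let T' be the tree on S obtained by relabeling T via the transposition σ = (u v), i.e., {x, y} is an edge of T' if and only if {σ(x), σ(y)} is an edge of T (the 'edge switch' of {u, v}). Then for any symmetric demand function W: S × S → ℝ≥0 with cost(T) = Σ_{{x,y}} W(x, y)·D_T(x, y) over unordered pairs, cost(T') − cost(T) = Σ_{i ∈ U, i ≠ u} (W(i, u) − W(i, v)) + Σ_{j ∈ V', j ≠ v} (W(j, v) − W(j, u)). In particular, all distances between pairs of vertices other than those involving u or v are unchanged. -/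
/-!
The transposition `σ = (u v)` is an isomorphism from the switched graph to the original one, so
`D_{T'}(x, y) = D_T(σ x, σ y)`. Distances inside `{u, v}` and inside its complement therefore do
not change, and for `x ∉ {u, v}` the distances from `x` to `u` and to `v` are interchanged, so that
only the pairs across the cut contribute to the change of cost:
`∑_{x ∉ {u, v}} (W(x, u) - W(x, v)) (D(x, v) - D(x, u))`.
Since `{u, v}` is a bridge, `D(x, v) - D(x, u)` is `1` on the component of `u` and `-1` on the
component of `v`.
-/

open Finset SimpleGraph

open scoped Classical

/-- The cost of a tree `T` with respect to a symmetric demand `W`: the sum over unordered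
pairs `{x, y}` of `W(x,y) · D_T(x,y)` (diagonal pairs contribute `0`). -/
noncomputable def treeCost {α : Type*} [Fintype α] (T : SimpleGraph α)
    (W : α → α → ℝ) (hW : ∀ x y, W x y = W y x) : ℝ :=
  ∑ p ∈ (Finset.univ : Finset α).sym2,
    Sym2.lift ⟨fun x y => W x y * (T.dist x y : ℝ),
      fun x y => by simp only []; rw [hW x y, T.dist_comm]⟩ p

section CutSum

variable {α : Type*}

lemma sum_sym2_disjUnion {M : Type*} [AddCommMonoid M] (F : Sym2 α → M) (s t : Finset α)
    (h : Disjoint s t) :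
    ∑ p ∈ (s.disjUnion t h).sym2, F p =
      ∑ p ∈ s.sym2, F p + ∑ p ∈ t.sym2, F p + ∑ x ∈ s, ∑ y ∈ t, F s(x, y) := by
  induction s using Finset.cons_induction with
  | empty => simp
  | cons a s ha ih =>
    have hst : Disjoint s t := h.mono_left (subset_cons ha)
    have hat : a ∉ s.disjUnion t hst := by
      simp only [mem_disjUnion, not_or]
      exact ⟨ha, disjoint_left.mp h (mem_cons_self a s)⟩
    have hcons : (s.cons a ha).disjUnion t h = (s.disjUnion t hst).cons a hat := by
      ext; simp
    rw [hcons, sym2_cons, sym2_cons, sum_disjUnion, sum_disjUnion, ih hst]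
    simp only [sum_map, Sym2.mkEmbedding_apply, sum_cons, sum_disjUnion]
    abel

lemma sum_sym2_eq_sum_compl_sum [Fintype α] {M : Type*} [AddCommMonoid M] (F : Sym2 α → M)
    (s : Finset α) (hs : ∀ p ∈ s.sym2, F p = 0) (hsc : ∀ p ∈ sᶜ.sym2, F p = 0) :
    ∑ p ∈ (univ : Finset α).sym2, F p = ∑ x ∈ sᶜ, ∑ y ∈ s, F s(x, y) := by
  have huniv : univ = sᶜ.disjUnion s disjoint_compl_left := by
    rw [disjUnion_eq_union, union_comm, union_compl]
  rw [huniv, sum_sym2_disjUnion, sum_eq_zero hs, sum_eq_zero hsc, zero_add, zero_add]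

lemma treeCost_sub_treeCost_of_dist_eq [Fintype α] (G G' : SimpleGraph α) (W : α → α → ℝ)
    (hW : ∀ x y, W x y = W y x) (s : Finset α)
    (hs : ∀ x ∈ s, ∀ y ∈ s, G'.dist x y = G.dist x y)
    (hsc : ∀ x ∉ s, ∀ y ∉ s, G'.dist x y = G.dist x y) :
    treeCost G' W hW - treeCost G W hW =
      ∑ x ∈ sᶜ, ∑ y ∈ s, W x y * ((G'.dist x y : ℝ) - G.dist x y) := by
  rw [treeCost, treeCost, ← sum_sub_distrib, sum_sym2_eq_sum_compl_sum _ s]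
  · simp only [Sym2.lift_mk, mul_sub]
  · rintro ⟨x, y⟩ hxy
    rw [mk_mem_sym2_iff] at hxy
    simp [hs x hxy.1 y hxy.2]
  · rintro ⟨x, y⟩ hxy
    simp only [mk_mem_sym2_iff, mem_compl] at hxy
    simp [hsc x hxy.1 y hxy.2]

end CutSum

section Isomorphism

variable {α β : Type*} {G : SimpleGraph α} {H : SimpleGraph β}

lemma edist_map_le (f : G →g H) (x y : α) : H.edist (f x) (f y) ≤ G.edist x y :=
  le_iInf fun p => (edist_le (p.map f)).trans_eq (by rw [Walk.length_map])

lemma dist_map_iso (e : G ≃g H) (x y : α) : H.dist (e x) (e y) = G.dist x y := by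
  have hge : G.edist x y ≤ H.edist (e x) (e y) := by
    simpa using edist_map_le e.symm.toHom (e x) (e y)
  exact congrArg ENat.toNat ((edist_map_le e.toHom x y).antisymm hge)

end Isomorphism

section EdgeSwitch

variable {α : Type*}

/-- The edge switch of `G` at `{u, v}`: the graph obtained by relabeling `G` via the transposition
`(u v)`. The vertices `u` and `v` need not be adjacent. -/
noncomputable def edgeSwitch (G : SimpleGraph α) (u v : α) : SimpleGraph α :=
  G.comap (Equiv.swap u v)

variable (G : SimpleGraph α) {u v x y : α}

lemma dist_edgeSwitch (u v x y : α) :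
    (edgeSwitch G u v).dist x y = G.dist (Equiv.swap u v x) (Equiv.swap u v y) :=
  (dist_map_iso (Iso.comap (Equiv.swap u v) G) x y).symm

lemma dist_edgeSwitch_of_notMem (hx : x ∉ ({u, v} : Finset α)) (hy : y ∉ ({u, v} : Finset α)) :
    (edgeSwitch G u v).dist x y = G.dist x y := by
  simp only [mem_insert, mem_singleton, not_or] at hx hy
  rw [dist_edgeSwitch, Equiv.swap_apply_of_ne_of_ne hx.1 hx.2,
    Equiv.swap_apply_of_ne_of_ne hy.1 hy.2]

lemma dist_edgeSwitch_of_mem (hx : x ∈ ({u, v} : Finset α)) (hy : y ∈ ({u, v} : Finset α)) :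
    (edgeSwitch G u v).dist x y = G.dist x y := by
  simp only [mem_insert, mem_singleton] at hx hy
  rcases hx with rfl | rfl <;> rcases hy with rfl | rfl <;> simp [dist_edgeSwitch, G.dist_comm]

lemma dist_edgeSwitch_left (hxu : x ≠ u) (hxv : x ≠ v) :
    (edgeSwitch G u v).dist x u = G.dist x v := by
  rw [dist_edgeSwitch, Equiv.swap_apply_of_ne_of_ne hxu hxv, Equiv.swap_apply_left]

lemma dist_edgeSwitch_right (hxu : x ≠ u) (hxv : x ≠ v) :
    (edgeSwitch G u v).dist x v = G.dist x u := by
  rw [dist_edgeSwitch, Equiv.swap_apply_of_ne_of_ne hxu hxv, Equiv.swap_apply_right]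

lemma treeCost_edgeSwitch_sub_treeCost [Fintype α] (huv : u ≠ v) (W : α → α → ℝ)
    (hW : ∀ x y, W x y = W y x) :
    treeCost (edgeSwitch G u v) W hW - treeCost G W hW =
      ∑ x ∈ {u, v}ᶜ, (W x u - W x v) * ((G.dist x v : ℝ) - G.dist x u) := by
  rw [treeCost_sub_treeCost_of_dist_eq G _ W hW {u, v}
    (fun _ hx _ hy => dist_edgeSwitch_of_mem G hx hy)
    (fun _ hx _ hy => dist_edgeSwitch_of_notMem G hx hy)]
  refine sum_congr rfl fun x hx => ?_
  simp only [mem_compl, mem_insert, mem_singleton, not_or] at hx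
  rw [sum_pair huv, dist_edgeSwitch_left G hx.1 hx.2, dist_edgeSwitch_right G hx.1 hx.2]
  ring

end EdgeSwitch

section Bridge

variable {α : Type*} {G : SimpleGraph α} {u v x : α}

lemma reachable_deleteEdges_or_of_reachable (h : G.Reachable x u) :
    (G.deleteEdges {s(u, v)}).Reachable u x ∨ (G.deleteEdges {s(u, v)}).Reachable v x := by
  obtain ⟨p⟩ := h
  induction p with
  | nil => exact .inl .rfl
  | @cons a b u hab _ ih =>
    by_cases he : s(a, b) = s(u, v)
    · rcases Sym2.eq_iff.mp he with ⟨rfl, -⟩ | ⟨rfl, -⟩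
      exacts [.inl .rfl, .inr .rfl]
    · have hba : (G.deleteEdges {s(u, v)}).Reachable b a :=
        (deleteEdges_adj.mpr ⟨hab, he⟩).symm.reachable
      exact ih.imp (·.trans hba) (·.trans hba)

lemma dist_eq_dist_add_one_of_isBridge (hb : G.IsBridge s(u, v)) (huv : G.Adj u v)
    (hx : (G.deleteEdges {s(u, v)}).Reachable u x) : G.dist x v = G.dist x u + 1 := by
  have hxv : G.Reachable x v := (hx.symm.mono (deleteEdges_le _)).trans huv.reachable
  refine le_antisymm ?_ ?_
  · have htri := huv.reachable.dist_triangle_right x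
    rwa [dist_eq_one_iff_adj.mpr huv] at htri
  · obtain ⟨p, hp⟩ := hxv.exists_walk_length_eq_dist
    have hmem : s(u, v) ∈ p.edges :=
      p.mem_edges_of_not_reachable_deleteEdges fun hxv' => hb (hx.trans hxv')
    have hu : u ∈ p.support := p.fst_mem_support_of_mem_edges hmem
    calc G.dist x u + 1 = G.dist x u + G.dist u v := by rw [dist_eq_one_iff_adj.mpr huv]
      _ ≤ (p.takeUntil u hu).length + (p.dropUntil u hu).length :=
        add_le_add (dist_le _) (dist_le _)
      _ = G.dist x v := by rw [← Walk.length_append, p.take_spec, hp]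

lemma compl_pair_eq_union_of_isBridge [Fintype α] (hG : G.Connected) (hb : G.IsBridge s(u, v)) :
    ({u, v}ᶜ : Finset α) =
      univ.filter (fun i => (G.deleteEdges {s(u, v)}).Reachable u i ∧ i ≠ u) ∪
        univ.filter (fun j => (G.deleteEdges {s(u, v)}).Reachable v j ∧ j ≠ v) := by
  ext x
  simp only [mem_compl, mem_insert, mem_singleton, not_or, mem_union, mem_filter, mem_univ,
    true_and]
  constructor
  · rintro ⟨hxu, hxv⟩
    exact (reachable_deleteEdges_or_of_reachable (hG x u)).imp (⟨·, hxu⟩) (⟨·, hxv⟩)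
  · rintro (⟨hx, hxu⟩ | ⟨hx, hxv⟩)
    · exact ⟨hxu, by rintro rfl; exact hb hx⟩
    · exact ⟨by rintro rfl; exact hb hx.symm, hxv⟩

lemma disjoint_filter_reachable_of_isBridge [Fintype α] (hb : G.IsBridge s(u, v)) :
    Disjoint (univ.filter fun i => (G.deleteEdges {s(u, v)}).Reachable u i ∧ i ≠ u)
      (univ.filter fun j => (G.deleteEdges {s(u, v)}).Reachable v j ∧ j ≠ v) :=
  disjoint_filter.mpr fun _ _ hu hv => hb (hu.1.trans hv.1.symm)

end Bridge

theorem edge_switch_cost_general {α : Type*} [Fintype α] {G G' : SimpleGraph α}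
    (hG : G.Connected) {u v : α} (hb : G.IsBridge s(u, v))
    (hG' : ∀ x y : α, G'.Adj x y ↔ G.Adj (Equiv.swap u v x) (Equiv.swap u v y))
    (W : α → α → ℝ) (hW : ∀ x y, W x y = W y x) :
    treeCost G' W hW - treeCost G W hW =
      (∑ i ∈ univ.filter (fun i : α => (G.deleteEdges {s(u, v)}).Reachable u i ∧ i ≠ u),
        (W i u - W i v)) +
      (∑ j ∈ univ.filter (fun j : α => (G.deleteEdges {s(u, v)}).Reachable v j ∧ j ≠ v),
        (W j v - W j u)) ∧
    ∀ x y : α, x ≠ u → x ≠ v → y ≠ u → y ≠ v → G'.dist x y = G.dist x y := by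
  obtain rfl : G' = edgeSwitch G u v := SimpleGraph.ext (funext₂ fun x y => propext (hG' x y))
  have huv : G.Adj u v := hb.reachable_iff_adj.mp (hG u v)
  refine ⟨?_, fun x y hxu hxv hyu hyv =>
    dist_edgeSwitch_of_notMem G (by simp [hxu, hxv]) (by simp [hyu, hyv])⟩
  rw [treeCost_edgeSwitch_sub_treeCost G huv.ne, compl_pair_eq_union_of_isBridge hG hb,
    sum_union (disjoint_filter_reachable_of_isBridge hb)]
  congr 1 <;> refine sum_congr rfl fun x hx => ?_
  · have hdist : G.dist x v = G.dist x u + 1 :=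
      dist_eq_dist_add_one_of_isBridge hb huv (mem_filter.mp hx).2.1
    rw [hdist]
    push_cast
    ring
  · have hdist : G.dist x u = G.dist x v + 1 := by
      rw [Sym2.eq_swap] at hb hx
      exact dist_eq_dist_add_one_of_isBridge hb huv.symm (mem_filter.mp hx).2.1
    rw [hdist]
    push_cast
    ring

/-- Let `T` be a finite tree on `S`, `{u, v}` an edge of `T`, and `U`,
`V'` the vertex sets of the components of `T − {u, v}` containing `u` and `v`.  Let `T'`
be the relabeling of `T` by the transposition `σ = (u v)`, i.e. `{x, y}` is an edge of
`T'` iff `{σ(x), σ(y)}` is an edge of `T` (the "edge switch").  Then for any symmetric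
nonnegative demand `W`,
`cost(T') − cost(T) = Σ_{i ∈ U, i ≠ u} (W(i,u) − W(i,v)) + Σ_{j ∈ V', j ≠ v} (W(j,v) − W(j,u))`;
in particular, all distances between pairs of vertices not involving `u` or `v` are
unchanged. -/
theorem edge_switch_cost {α : Type*} [Fintype α] (T T' : SimpleGraph α)
    (hT : T.IsTree) (u v : α) (huv : T.Adj u v)
    (hT' : ∀ x y : α, T'.Adj x y ↔ T.Adj (Equiv.swap u v x) (Equiv.swap u v y))
    (W : α → α → ℝ) (hWs : ∀ x y, W x y = W y x) (hW0 : ∀ x y, 0 ≤ W x y) :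
    treeCost T' W hWs - treeCost T W hWs =
      (∑ i ∈ Finset.univ.filter
          (fun i : α => (T.deleteEdges {s(u, v)}).Reachable u i ∧ i ≠ u),
        (W i u - W i v)) +
      (∑ j ∈ Finset.univ.filter
          (fun j : α => (T.deleteEdges {s(u, v)}).Reachable v j ∧ j ≠ v),
        (W j v - W j u)) ∧
    ∀ x y : α, x ≠ u → x ≠ v → y ≠ u → y ≠ v → T'.dist x y = T.dist x y :=
  edge_switch_cost_general hT.connected
    (isAcyclic_iff_forall_adj_isBridge.mp hT.isAcyclic huv) hT' W hWs
end

section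
/- Let T be a finite tree on vertex set S, {u, v} an edge of T, and U, V' the vertex sets of the components of T − {u, v} containing u and v. For u' ∈ U and v' ∈ V', let T'(u', v') be the tree obtained from T by removing edge {u, v} and adding edge {u', v'}. Then for any symmetric demand function W: S × S → ℝ≥0, cost(T'(u', v')) = A + F(u') + G(v'), where A = Σ_{{i,j} ⊆ U} W(i, j)·D_T(i, j) + Σ_{{i,j} ⊆ V'} W(i, j)·D_T(i, j) + Σ_{i ∈ U, j ∈ V'} W(i, j) is independent of the choice of u' and v', F(u') = Σ_{i ∈ U} D_T(i, u')·(Σ_{j ∈ V'} W(i, j)), and G(v') = Σ_{j ∈ V'} D_T(j, v')·(Σ_{i ∈ U} W(i, j)). Consequently, the choice of u' minimizing cost(T'(u', v')) and the choice of v' minimizing it can be made independently of each other. -/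
/-!
Let `H = T − {u, v}`. A path cannot cross a bridge and return, so inserting a bridge changes no
distance within a component of `H`, while a walk between the two sides of the bridge splits at it.
Hence `T` and `T' = T'(u', v')` both have the distances of `H` inside `U` and inside `V'`, and
`D_{T'}(i, j) = D_T(i, u') + 1 + D_T(j, v')` for `i ∈ U`, `j ∈ V'`. It remains to split the sum over
unordered pairs into those inside `U`, those inside `V'` and the crossing ones.
-/

open Finset SimpleGraph

open scoped Classical

section Bridge

variable {α : Type*} {G : SimpleGraph α} {e : Sym2 α} {a b x y : α}

theorem exists_append_toWalk_append_of_mem_darts {p : G.Walk x y} {d : G.Dart} (hd : d ∈ p.darts) :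
    ∃ (q : G.Walk x d.fst) (r : G.Walk d.snd y), p = (q.append d.adj.toWalk).append r :=
  (p.isSubwalk_toWalk_iff_mem_darts d.adj).2 hd

theorem notMem_edges_of_isBridge_of_isTrail (he : G.IsBridge e)
    (hxy : (G.deleteEdges {e}).Reachable x y) {p : G.Walk x y} (hp : p.IsTrail) : e ∉ p.edges := by
  intro hep
  obtain ⟨d, hd, rfl⟩ := List.mem_map.1 hep
  obtain ⟨q, r, rfl⟩ := exists_append_toWalk_append_of_mem_darts hd
  have hnodup := hp.edges_nodup
  simp only [Walk.edges_append, Adj.edges_toWalk] at hnodup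
  have hq : (G.deleteEdges {d.edge}).Reachable x d.fst :=
    reachable_deleteEdges_iff_exists_walk.2 ⟨q, by grind [Dart.edge]⟩
  have hr : (G.deleteEdges {d.edge}).Reachable d.snd y :=
    reachable_deleteEdges_iff_exists_walk.2 ⟨r, by grind [Dart.edge]⟩
  exact isBridge_iff.1 he ((hq.symm.trans hxy).trans hr.symm)

theorem dist_deleteEdges_of_isBridge (he : G.IsBridge e)
    (hxy : (G.deleteEdges {e}).Reachable x y) : (G.deleteEdges {e}).dist x y = G.dist x y := by
  refine le_antisymm ?_ (hxy.dist_anti (deleteEdges_le _))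
  obtain ⟨p, hp, hlen⟩ := (hxy.mono (deleteEdges_le _)).exists_path_of_dist
  have hep := notMem_edges_of_isBridge_of_isTrail he hxy hp.isTrail
  calc (G.deleteEdges {e}).dist x y ≤ (p.toDeleteEdge e hep).length := dist_le _
    _ = G.dist x y := by rw [Walk.length_transfer, hlen]

theorem eq_and_eq_of_isBridge_of_adj (hab : G.IsBridge s(a, b))
    (hx : (G.deleteEdges {s(a, b)}).Reachable a x)
    (hy : ¬ (G.deleteEdges {s(a, b)}).Reachable a y) (hxy : G.Adj x y) : x = a ∧ y = b := by
  have hedge : s(x, y) = s(a, b) := by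
    by_contra hne
    exact hy (hx.trans (deleteEdges_adj.2 ⟨hxy, hne⟩).reachable)
  obtain h | ⟨rfl, -⟩ := Sym2.eq_iff.1 hedge
  · exact h
  · exact absurd hx (isBridge_iff.1 hab)

theorem dist_eq_add_one_add_of_isBridge (hadj : G.Adj a b) (hab : G.IsBridge s(a, b))
    (hx : (G.deleteEdges {s(a, b)}).Reachable a x) (hy : (G.deleteEdges {s(a, b)}).Reachable b y) :
    G.dist x y = G.dist x a + 1 + G.dist b y := by
  have hxa : G.Reachable x a := (hx.mono (deleteEdges_le _)).symm
  apply le_antisymm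
  · have hxy := hxa.dist_triangle_left y
    have hay := hadj.reachable.dist_triangle_left y
    rw [dist_eq_one_iff_adj.2 hadj] at hay
    omega
  · have hby : G.Reachable b y := hy.mono (deleteEdges_le _)
    obtain ⟨p, hp⟩ := ((hxa.trans hadj.reachable).trans hby).exists_walk_length_eq_dist
    obtain ⟨d, hd, hfst, hsnd⟩ := p.exists_boundary_dart
      {z | (G.deleteEdges {s(a, b)}).Reachable a z} hx
      fun h => isBridge_iff.1 hab (h.trans hy.symm)
    obtain ⟨q, r, rfl⟩ := exists_append_toWalk_append_of_mem_darts hd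
    obtain ⟨rfl, rfl⟩ := eq_and_eq_of_isBridge_of_adj hab hfst hsnd d.adj
    have hq := dist_le q
    have hr := dist_le r
    simp only [Walk.length_append, Adj.length_toWalk] at hp
    omega

theorem reachable_deleteEdges_or_of_reachable_s17 (hax : G.Reachable a x) :
    (G.deleteEdges {s(a, b)}).Reachable a x ∨ (G.deleteEdges {s(a, b)}).Reachable b x := by
  by_contra hx
  obtain ⟨p⟩ := hax
  obtain ⟨d, -, hfst, hsnd⟩ := p.exists_boundary_dart
    {z | (G.deleteEdges {s(a, b)}).Reachable a z ∨ (G.deleteEdges {s(a, b)}).Reachable b z}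
    (Or.inl .rfl) hx
  by_cases hd : s(d.fst, d.snd) = s(a, b)
  · obtain ⟨-, h⟩ | ⟨-, h⟩ := Sym2.eq_iff.1 hd
    · exact hsnd (h ▸ Or.inr .rfl)
    · exact hsnd (h ▸ Or.inl .rfl)
  · have hstep : (G.deleteEdges {s(a, b)}).Reachable d.fst d.snd :=
      (deleteEdges_adj.2 ⟨d.adj, hd⟩).reachable
    exact hsnd (hfst.imp (·.trans hstep) (·.trans hstep))

end Bridge

section ReplaceEdge

variable {α : Type*} {G : SimpleGraph α} {e e' : Sym2 α} {a b x y : α}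

/-- The edge replacement operation: `G` with the edge `e` removed and the edge `e'` added.
A loop `e'` adds no edge. -/
def replaceEdge (G : SimpleGraph α) (e e' : Sym2 α) : SimpleGraph α :=
  fromEdgeSet ((G.edgeSet \ {e}) ∪ {e'})

theorem deleteEdges_replaceEdge (he' : e' ∉ (G.deleteEdges {e}).edgeSet) :
    (replaceEdge G e e').deleteEdges {e'} = G.deleteEdges {e} := by
  rw [edgeSet_deleteEdges] at he'
  rw [← edgeSet_inj, edgeSet_deleteEdges, edgeSet_deleteEdges, replaceEdge, edgeSet_fromEdgeSet]
  have hloop := edgeSet_subset_compl_diagSet G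
  grind

theorem deleteEdges_replaceEdge_of_not_reachable (hab : ¬ (G.deleteEdges {e}).Reachable a b) :
    (replaceEdge G e s(a, b)).deleteEdges {s(a, b)} = G.deleteEdges {e} :=
  deleteEdges_replaceEdge fun h => hab (Adj.reachable h)

theorem isBridge_replaceEdge (hab : ¬ (G.deleteEdges {e}).Reachable a b) :
    (replaceEdge G e s(a, b)).IsBridge s(a, b) := by
  rwa [isBridge_iff, deleteEdges_replaceEdge_of_not_reachable hab]

theorem dist_replaceEdge_of_reachable (he : G.IsBridge e)
    (hab : ¬ (G.deleteEdges {e}).Reachable a b) (hxy : (G.deleteEdges {e}).Reachable x y) :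
    (replaceEdge G e s(a, b)).dist x y = G.dist x y := by
  have hdel := deleteEdges_replaceEdge_of_not_reachable hab
  rw [← dist_deleteEdges_of_isBridge (isBridge_replaceEdge hab) (hdel ▸ hxy), hdel,
    dist_deleteEdges_of_isBridge he hxy]

theorem dist_replaceEdge_across (he : G.IsBridge e) (hab : ¬ (G.deleteEdges {e}).Reachable a b)
    (hx : (G.deleteEdges {e}).Reachable a x) (hy : (G.deleteEdges {e}).Reachable b y) :
    (replaceEdge G e s(a, b)).dist x y = G.dist x a + 1 + G.dist y b := by
  have hdel := deleteEdges_replaceEdge_of_not_reachable hab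
  have hadj : (replaceEdge G e s(a, b)).Adj a b :=
    (fromEdgeSet_adj _).2 ⟨Or.inr rfl, fun h => hab (h ▸ .rfl)⟩
  rw [dist_eq_add_one_add_of_isBridge hadj (isBridge_replaceEdge hab) (hdel ▸ hx) (hdel ▸ hy),
    dist_replaceEdge_of_reachable he hab hx.symm, dist_replaceEdge_of_reachable he hab hy,
    G.dist_comm (u := b)]

end ReplaceEdge

section Sums

variable {α β M : Type*} [AddCommMonoid M]

theorem sum_sym2_insert [DecidableEq α] {a : α} {s : Finset α} (ha : a ∉ s) (f : Sym2 α → M) :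
    ∑ p ∈ (insert a s).sym2, f p = ∑ b ∈ insert a s, f s(a, b) + ∑ p ∈ s.sym2, f p := by
  rw [← cons_eq_insert a s ha, sym2_cons, sum_disjUnion, sum_map]
  rfl

theorem sum_sym2_union [DecidableEq α] {s t : Finset α} (hst : Disjoint s t) (f : Sym2 α → M) :
    ∑ p ∈ (s ∪ t).sym2, f p =
      ∑ p ∈ s.sym2, f p + ∑ p ∈ t.sym2, f p + ∑ i ∈ s, ∑ j ∈ t, f s(i, j) := by
  induction s using Finset.induction_on with
  | empty => simp
  | insert a s ha ih =>
    obtain ⟨hat, hst⟩ := disjoint_insert_left.1 hst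
    have hunion : a ∉ s ∪ t := notMem_union.2 ⟨ha, hat⟩
    rw [insert_union, sum_sym2_insert hunion, ih hst, sum_sym2_insert ha, sum_insert hunion,
      sum_union hst, sum_insert ha, sum_insert ha]
    abel

theorem sum_sum_add_one_add_nsmul (s : Finset α) (t : Finset β) (f : α → ℕ) (g : β → ℕ)
    (w : α → β → M) :
    ∑ i ∈ s, ∑ j ∈ t, (f i + 1 + g j) • w i j =
      ∑ i ∈ s, ∑ j ∈ t, w i j + ∑ i ∈ s, f i • ∑ j ∈ t, w i j +
        ∑ j ∈ t, g j • ∑ i ∈ s, w i j := by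
  simp only [add_nsmul, one_nsmul, sum_add_distrib, smul_sum]
  rw [sum_comm (s := t)]
  abel

end Sums

section Cost

variable {α M : Type*} [AddCommMonoid M]

/-- The cost of `G` restricted to the unordered pairs inside `s`, for a demand `w` with values in an
additive monoid, so that a distance acts as a multiplicity. -/
noncomputable def costOn (G : SimpleGraph α) (w : Sym2 α → M) (s : Finset α) : M :=
  ∑ p ∈ s.sym2, Sym2.lift ⟨G.dist, fun _ _ => G.dist_comm⟩ p • w p

theorem costOn_congr {G G' : SimpleGraph α} {s : Finset α}
    (h : ∀ x ∈ s, ∀ y ∈ s, G.dist x y = G'.dist x y) (w : Sym2 α → M) :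
    costOn G w s = costOn G' w s := by
  refine sum_congr rfl fun p => p.ind fun x y hxy => ?_
  obtain ⟨hx, hy⟩ := mk_mem_sym2_iff.1 hxy
  simp only [Sym2.lift_mk, h x hx y hy]

theorem costOn_union [DecidableEq α] (G : SimpleGraph α) (w : Sym2 α → M) {s t : Finset α}
    (hst : Disjoint s t) :
    costOn G w (s ∪ t) =
      costOn G w s + costOn G w t + ∑ i ∈ s, ∑ j ∈ t, G.dist i j • w s(i, j) :=
  sum_sym2_union hst _

theorem costOn_lift {R : Type*} [NonAssocSemiring R] (G : SimpleGraph α) (W : α → α → R)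
    (hW : ∀ x y, W x y = W y x) (s : Finset α) :
    costOn G (Sym2.lift ⟨W, hW⟩) s =
      ∑ p ∈ s.sym2, Sym2.lift ⟨fun x y => W x y * (G.dist x y : R),
        fun x y => by simp only [hW x y, G.dist_comm]⟩ p :=
  sum_congr rfl fun p _ => p.ind fun x y => nsmul_eq_mul' (W x y) (G.dist x y)

theorem edge_replacement_cost_general [DecidableEq α] {T : SimpleGraph α} {u v u' v' : α}
    (huv : T.IsBridge s(u, v)) (hu' : (T.deleteEdges {s(u, v)}).Reachable u u')
    (hv' : (T.deleteEdges {s(u, v)}).Reachable v v') (w : Sym2 α → M) {U V : Finset α}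
    (hU : ∀ i ∈ U, (T.deleteEdges {s(u, v)}).Reachable u i)
    (hV : ∀ j ∈ V, (T.deleteEdges {s(u, v)}).Reachable v j) :
    costOn (replaceEdge T s(u, v) s(u', v')) w (U ∪ V) =
      (costOn T w U + costOn T w V + ∑ i ∈ U, ∑ j ∈ V, w s(i, j)) +
        ∑ i ∈ U, T.dist i u' • ∑ j ∈ V, w s(i, j) +
        ∑ j ∈ V, T.dist j v' • ∑ i ∈ U, w s(i, j) := by
  have hnr := isBridge_iff.1 huv
  have hnr' : ¬ (T.deleteEdges {s(u, v)}).Reachable u' v' :=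
    fun h => hnr ((hu'.trans h).trans hv'.symm)
  have hUV : Disjoint U V :=
    disjoint_left.2 fun i hi hi' => hnr ((hU i hi).trans (hV i hi').symm)
  have hcostU : costOn (replaceEdge T s(u, v) s(u', v')) w U = costOn T w U :=
    costOn_congr (fun x hx y hy =>
      dist_replaceEdge_of_reachable huv hnr' ((hU x hx).symm.trans (hU y hy))) w
  have hcostV : costOn (replaceEdge T s(u, v) s(u', v')) w V = costOn T w V :=
    costOn_congr (fun x hx y hy =>
      dist_replaceEdge_of_reachable huv hnr' ((hV x hx).symm.trans (hV y hy))) w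
  have hcross : ∑ i ∈ U, ∑ j ∈ V, (replaceEdge T s(u, v) s(u', v')).dist i j • w s(i, j) =
      ∑ i ∈ U, ∑ j ∈ V, (T.dist i u' + 1 + T.dist j v') • w s(i, j) :=
    sum_congr rfl fun i hi => sum_congr rfl fun j hj => by
      rw [dist_replaceEdge_across huv hnr' (hu'.symm.trans (hU i hi)) (hv'.symm.trans (hV j hj))]
  rw [costOn_union _ _ hUV, hcostU, hcostV, hcross, sum_sum_add_one_add_nsmul]
  simp only [add_assoc]

end Cost

/-- Let `T` be a finite tree on `S`, `{u, v}` an edge of `T`, and `U`,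
`V'` the vertex sets of the components of `T − {u, v}` containing `u` and `v`.  For
`u' ∈ U`, `v' ∈ V'`, let `T'(u', v')` be the tree obtained by removing edge `{u, v}` and
adding edge `{u', v'}`.  Then for any symmetric nonnegative demand `W`,
`cost(T'(u', v')) = A + F(u') + G(v')`, where
`A = Σ_{{i,j} ⊆ U} W(i,j)·D_T(i,j) + Σ_{{i,j} ⊆ V'} W(i,j)·D_T(i,j) + Σ_{i ∈ U, j ∈ V'} W(i,j)`
does not depend on `u'`, `v'`, `F(u') = Σ_{i ∈ U} D_T(i,u')·(Σ_{j ∈ V'} W(i,j))` and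
`G(v') = Σ_{j ∈ V'} D_T(j,v')·(Σ_{i ∈ U} W(i,j))`; hence the minimizing choices of `u'`
and `v'` can be made independently. -/
theorem edge_replacement_cost {α : Type*} [Fintype α] (T : SimpleGraph α)
    (hT : T.IsTree) (u v : α) (huv : T.Adj u v)
    (W : α → α → ℝ) (hWs : ∀ x y, W x y = W y x) (hW0 : ∀ x y, 0 ≤ W x y) :
    ∀ UF VF : Finset α,
      UF = Finset.univ.filter (fun i : α => (T.deleteEdges {s(u, v)}).Reachable u i) →
      VF = Finset.univ.filter (fun j : α => (T.deleteEdges {s(u, v)}).Reachable v j) →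
      ∀ u' v' : α, u' ∈ UF → v' ∈ VF →
        treeCost (SimpleGraph.fromEdgeSet ((T.edgeSet \ {s(u, v)}) ∪ {s(u', v')})) W hWs =
          ((∑ p ∈ UF.sym2,
              Sym2.lift ⟨fun x y => W x y * (T.dist x y : ℝ),
                fun x y => by simp only []; rw [hWs x y, T.dist_comm]⟩ p) +
            (∑ p ∈ VF.sym2,
              Sym2.lift ⟨fun x y => W x y * (T.dist x y : ℝ),
                fun x y => by simp only []; rw [hWs x y, T.dist_comm]⟩ p) +
            ∑ i ∈ UF, ∑ j ∈ VF, W i j) +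
          (∑ i ∈ UF, (T.dist i u' : ℝ) * ∑ j ∈ VF, W i j) +
          (∑ j ∈ VF, (T.dist j v' : ℝ) * ∑ i ∈ UF, W i j) := by
  intro UF VF hUF hVF u' v' hu' hv'
  have hU : ∀ i, i ∈ UF ↔ (T.deleteEdges {s(u, v)}).Reachable u i := by simp [hUF]
  have hV : ∀ j, j ∈ VF ↔ (T.deleteEdges {s(u, v)}).Reachable v j := by simp [hVF]
  have hcover : UF ∪ VF = univ := eq_univ_of_forall fun x => mem_union.2 <|
    (reachable_deleteEdges_or_of_reachable_s17 (hT.connected.preconnected u x)).imp (hU x).2 (hV x).2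
  have hcost := edge_replacement_cost_general (isAcyclic_iff_forall_isBridge.1 hT.isAcyclic huv)
    ((hU u').1 hu') ((hV v').1 hv') (Sym2.lift ⟨W, hWs⟩) (fun i => (hU i).1) fun j => (hV j).1
  simpa only [treeCost, replaceEdge, hcover, costOn_lift, nsmul_eq_mul, Sym2.lift_mk] using hcost
end
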